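/- Let Γ be a distance-regular graph with diameter D ≥ 3 and valency k satisfying 3 ≤ k < 3(a_1+1), and suppose Γ contains a 3-claw but no 4-claws. Then D ≤ 4. -/

import Mathlib

/-!
A distance-regular graph satisfying the hypotheses contains a quadrangle, i.e. an induced 4-cycle,
and one which contains a quadrangle and no 4-claw has diameter at most four.

*A 3-claw forces a quadrangle.* If there is no quadrangle, then the complement `H` of the local
graph at a vertex `y` has no induced `2K₂`, it is regular, and any two adjacent vertices of `H` have
the same number of common neighbours. It has no 4-clique, as there are no 4-claws. At the centre of
a 3-claw we have `2 ≤ c₂`, since otherwise three closed neighbourhoods in the local graph would be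
disjoint and contain `3 (a₁ + 1) > k` vertices; this means that no edge of `H` is dominating. Such
an `H` is triangle-free, contrary to the 3-claw. Indeed, in the presence of a triangle, either every
triangle has the property that each neighbour of one of its vertices is adjacent to another one,
which is quickly contradictory, or the neighbours of each vertex `r` of `H` induce a pentagon with
every vertex blown up to an independent set of the same size `ρ`. In the latter case, the common
neighbours of `r` and a vertex `t` nonadjacent to `r` fill all classes of this pentagon but one, of
which they contain nothing, and this produces a `2K₂` or a 4-clique.

*A quadrangle forces `D ≤ 4`.* Suppose `D ≥ 5`. Terwilliger's inequality, summed up, gives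
`5 (a₁ + 2) ≤ 2 k` and `c₂ + 3 (a₁ + 2) ≤ b₂ + k`. For nonadjacent neighbours `p`, `q` of a vertex
`y`, the neighbours of `y` adjacent to neither `p` nor `q` form a clique, as there are no 4-claws;
the two bounds make it so large that the maximal cliques obtained from it (the lines) meet pairwise
in at most one vertex, cover every edge, and are exactly three through each vertex. Hence there are
fewer lines than vertices, which makes `-3` an eigenvalue, and an eigenfunction depending only on
the distance from a base vertex sums to zero over every line. Applied to a line along a geodesic of
length five, from both ends, this gives two independent linear equations for the values at `2` and
`3` of that eigenfunction, which therefore vanishes.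
-/

open SimpleGraph Finset

/-- `G` is a distance-regular graph with diameter `D` and intersection numbers
`b i` (number of neighbours of `y` at distance `i+1` from `x` when `dist x y = i`) and
`c i` (number of neighbours of `y` at distance `i-1` from `x` when `dist x y = i`). -/
def IsDRG {V : Type*} [Fintype V] (G : SimpleGraph V) (D : ℕ) (b c : ℕ → ℕ) : Prop :=
  G.Connected ∧
  (∃ x y : V, G.dist x y = D) ∧
  (∀ x y : V, G.dist x y ≤ D) ∧
  c 0 = 0 ∧ c 1 = 1 ∧ b D = 0 ∧
  (∀ i ≤ D, ∀ x y : V, G.dist x y = i →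
    {z : V | G.Adj y z ∧ G.dist x z = i - 1}.ncard = c i ∧
    {z : V | G.Adj y z ∧ G.dist x z = i + 1}.ncard = b i)

/-- `G` contains a `t`-claw: a vertex together with `t` pairwise nonadjacent neighbours
(an induced `K_{1,t}`). -/
def HasClaw {V : Type*} (G : SimpleGraph V) (t : ℕ) : Prop :=
  ∃ (x : V) (s : Finset V), s.card = t ∧ (∀ y ∈ s, G.Adj x y) ∧
    (s : Set V).Pairwise fun y z => ¬ G.Adj y z

/-- `θ` is an eigenvalue of the (real) adjacency matrix of `G`. -/
def IsAdjEigenvalue {V : Type*} [Fintype V] (G : SimpleGraph V) [DecidableRel G.Adj]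
    (θ : ℝ) : Prop :=
  ∃ v : V → ℝ, v ≠ 0 ∧ (G.adjMatrix ℝ).mulVec v = θ • v

/-- `G` contains an induced quadrangle: vertices `x, z₁, y, z₂` with
`dist x y = dist z₁ z₂ = 2` inducing a 4-cycle. -/
def HasQuadrangle {V : Type*} (G : SimpleGraph V) : Prop :=
  ∃ x z₁ y z₂ : V, G.dist x y = 2 ∧ G.dist z₁ z₂ = 2 ∧
    G.Adj x z₁ ∧ G.Adj z₁ y ∧ G.Adj y z₂ ∧ G.Adj z₂ x

/-- The diameter-3 intersection array `{β₀,β₁,β₂; γ₁,γ₂,γ₃}`. -/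
def arr3 (b c : ℕ → ℕ) (β₀ β₁ β₂ γ₁ γ₂ γ₃ : ℕ) : Prop :=
  b 0 = β₀ ∧ b 1 = β₁ ∧ b 2 = β₂ ∧ c 1 = γ₁ ∧ c 2 = γ₂ ∧ c 3 = γ₃

/-! ### Blow-ups of the pentagon -/

theorem cycleGraph_five_adj_iff {i j : Fin 5} :
    (cycleGraph 5).Adj i j ↔ j = i + 1 ∨ j = i + 4 := by
  revert i j
  decide

theorem eq_of_cycleGraph_five_adj_iff {i i' : Fin 5}
    (h : ∀ j, (cycleGraph 5).Adj i j ↔ (cycleGraph 5).Adj i' j) : i = i' := by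
  revert i i'
  decide

theorem exists_adj_notMem_of_isIndepSet_cycleGraph_five (T : Finset (Fin 5))
    (hindep : ∀ i ∈ T, ∀ j ∈ T, ¬ (cycleGraph 5).Adj i j) :
    ∃ i ∉ T, ∃ j ∉ T, (cycleGraph 5).Adj i j := by
  revert T
  decide

theorem exists_mem_iff_adj_cycleGraph_five (T : Finset (Fin 5)) (hne : T ≠ ∅)
    (hindep : ∀ i ∈ T, ∀ j ∈ T, ¬ (cycleGraph 5).Adj i j)
    (hopp : ∀ i ∈ T, ∀ j k, (cycleGraph 5).Adj j k → (cycleGraph 5).Adj i j ∨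
      (cycleGraph 5).Adj i k ∨ j ∈ T ∨ k ∈ T) :
    ∃ i, ∀ j, j ∈ T ↔ (cycleGraph 5).Adj i j := by
  revert T
  decide

section Pentagon

variable {V : Type*} {H : SimpleGraph V}

/-- `H` has no induced `2K₂`, i.e. any two edges of `H` share a vertex or are joined by an edge.
A shared vertex need not be mentioned: if `p = x`, then `p` is adjacent to `y`. -/
def TwoKTwoFree (H : SimpleGraph V) : Prop :=
  ∀ ⦃p q x y : V⦄, H.Adj p q → H.Adj x y → H.Adj p x ∨ H.Adj p y ∨ H.Adj q x ∨ H.Adj q y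

theorem TwoKTwoFree.induce (h : TwoKTwoFree H) (s : Set V) : TwoKTwoFree (H.induce s) :=
  fun _ _ _ _ hpq hxy => h hpq hxy

theorem not_adj_of_cliqueFree_three (h : H.CliqueFree 3) {x y z : V} (hxy : H.Adj x y)
    (hxz : H.Adj x z) : ¬ H.Adj y z := by
  classical
  exact fun hyz => h {x, y, z} (is3Clique_triple_iff.2 ⟨hxy, hxz, hyz⟩)

theorem exists_forall_adj_iff_of_pentagon (htri : H.CliqueFree 3) (h2K2 : TwoKTwoFree H)
    (v : cycleGraph 5 ↪g H) {w w' : V} (hw : H.Adj w w') :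
    ∃ i, ∀ j, H.Adj w (v j) ↔ (cycleGraph 5).Adj i j := by
  classical
  have indep (u : V) (i j : Fin 5) (hi : H.Adj u (v i)) (hj : H.Adj u (v j)) :
      ¬ (cycleGraph 5).Adj i j := fun hij =>
    not_adj_of_cliqueFree_three htri hi hj (v.map_adj_iff.2 hij)
  obtain ⟨i, hi, i', hi', hii'⟩ := exists_adj_notMem_of_isIndepSet_cycleGraph_five
    {i | H.Adj w' (v i)} (by simpa using fun i hi j => indep w' i j hi)
  have hne : ∃ i, H.Adj w (v i) := by
    have := h2K2 hw (v.map_adj_iff.2 hii')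
    simp only [mem_filter, mem_univ, true_and] at hi hi'
    tauto
  obtain ⟨i, hi⟩ := exists_mem_iff_adj_cycleGraph_five {i | H.Adj w (v i)}
    (by simpa [← nonempty_iff_ne_empty, Finset.Nonempty] using hne)
    (by simpa using fun i hi j => indep w i j hi) (by
      intro i hi j k hjk
      have := h2K2 (mem_filter.1 hi).2 (v.map_adj_iff.2 hjk)
      simp only [v.map_adj_iff] at this
      simp only [mem_filter, mem_univ, true_and]
      tauto)
  exact ⟨i, by simpa using hi⟩

theorem exists_pentagon_labelling (htri : H.CliqueFree 3) (h2K2 : TwoKTwoFree H)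
    (hiso : ∀ w, ∃ w', H.Adj w w') (v : cycleGraph 5 ↪g H) :
    ∃ f : V → Fin 5, (∀ x y, H.Adj x y ↔ (cycleGraph 5).Adj (f x) (f y)) ∧ ∀ i, f (v i) = i := by
  choose nbr hnbr using hiso
  choose f hf using fun w => exists_forall_adj_iff_of_pentagon htri h2K2 v (hnbr w)
  refine ⟨f, fun x y => ?_, fun i => ?_⟩
  · refine ⟨fun hxy => ?_, fun hxy => ?_⟩
    · have hsep : ∀ i i', (∀ j, (cycleGraph 5).Adj i j → ¬ (cycleGraph 5).Adj i' j) →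
          (cycleGraph 5).Adj i i' := by decide
      refine hsep _ _ fun j hj hj' => ?_
      exact not_adj_of_cliqueFree_three htri hxy ((hf x j).2 hj) ((hf y j).2 hj')
    · have hjoin : ∀ i i', (cycleGraph 5).Adj i i' → ∃ j j', (cycleGraph 5).Adj i j ∧
          (cycleGraph 5).Adj i' j' ∧ ¬ (cycleGraph 5).Adj i j' ∧ ¬ (cycleGraph 5).Adj i' j ∧
          ¬ (cycleGraph 5).Adj j j' := by decide
      obtain ⟨j, j', hxj, hyj', hxj', hyj, hjj'⟩ := hjoin _ _ hxy
      have := h2K2 ((hf x j).2 hxj) ((hf y j').2 hyj')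
      rw [hf x, v.map_adj_iff, H.adj_comm (v j), hf y] at this
      tauto
  · exact eq_of_cycleGraph_five_adj_iff fun j => by rw [← hf, v.map_adj_iff]

theorem exists_pentagon_embedding {p a t b q : V} (hpa : H.Adj p a) (hat : H.Adj a t)
    (htb : H.Adj t b) (hbq : H.Adj b q) (hpq : H.Adj p q) (hpt : ¬ H.Adj p t) (hpb : ¬ H.Adj p b)
    (hab : ¬ H.Adj a b) (haq : ¬ H.Adj a q) (htq : ¬ H.Adj t q) :
    Nonempty (cycleGraph 5 ↪g H) := by
  have hv (i j : Fin 5) :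
      H.Adj (![p, a, t, b, q] i) (![p, a, t, b, q] j) ↔ (cycleGraph 5).Adj i j := by
    fin_cases i <;> fin_cases j <;> simp [*, H.adj_comm, cycleGraph_five_adj_iff]
  have hinj : Function.Injective ![p, a, t, b, q] := fun i i' h =>
    eq_of_cycleGraph_five_adj_iff fun j => by rw [← hv, h, hv]
  exact ⟨⟨⟨![p, a, t, b, q], hinj⟩, hv _ _⟩⟩

variable [Fintype V] [DecidableRel H.Adj]

theorem TwoKTwoFree.exists_common_neighbor (h2K2 : TwoKTwoFree H) {d : ℕ}
    (hreg : H.IsRegularOfDegree d) {p q t : V} (hpq : H.Adj p q) (htp : ¬ H.Adj t p)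
    (htq : ¬ H.Adj t q) : ∃ a, H.Adj p a ∧ H.Adj a t := by
  by_contra! hno
  have hsub : H.neighborFinset t ⊆ H.neighborFinset q := fun s hs => by
    rw [mem_neighborFinset] at hs ⊢
    have := h2K2 hs hpq
    have := hno s
    simp only [H.adj_comm _ s] at *
    tauto
  classical
  have heq := eq_of_subset_of_card_le hsub (by simp [hreg.degree_eq])
  exact htp (by rw [← mem_neighborFinset, heq, mem_neighborFinset]; exact hpq.symm)

theorem exists_pentagon_labelling_of_isRegularOfDegree (htri : H.CliqueFree 3)
    (h2K2 : TwoKTwoFree H) {d : ℕ} (hreg : H.IsRegularOfDegree d) {p q t : V} (hpq : H.Adj p q)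
    (htp : ¬ H.Adj t p) (htq : ¬ H.Adj t q) :
    ∃ (f : V → Fin 5) (ρ : ℕ), (∀ x y, H.Adj x y ↔ (cycleGraph 5).Adj (f x) (f y)) ∧ d = 2 * ρ ∧
      ∀ i, #{x | f x = i} = ρ := by
  classical
  obtain ⟨a, hpa, hat⟩ := h2K2.exists_common_neighbor hreg hpq htp htq
  obtain ⟨b, hqb, hbt⟩ := h2K2.exists_common_neighbor hreg hpq.symm htq htp
  have hd : 0 < d := hreg.degree_eq p ▸ (H.degree_pos_iff_exists_adj p).2 ⟨q, hpq⟩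
  obtain ⟨v⟩ := exists_pentagon_embedding hpa hat hbt.symm hqb.symm hpq
    (fun h => htp h.symm) (not_adj_of_cliqueFree_three htri hpq.symm hqb)
    (not_adj_of_cliqueFree_three htri hat.symm hbt.symm)
    (fun h => not_adj_of_cliqueFree_three htri hpq hpa h.symm) htq
  obtain ⟨f, hf, hfv⟩ := exists_pentagon_labelling htri h2K2
    (fun w => (H.degree_pos_iff_exists_adj w).1 (hreg.degree_eq w ▸ hd)) v
  have hdeg (i : Fin 5) : #{x | f x = i + 1} + #{x | f x = i + 4} = d := by
    rw [← hreg.degree_eq (v i), ← card_neighborFinset_eq_degree, ← card_union_of_disjoint]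
    · congr 1
      ext x
      simp only [mem_union, mem_filter, mem_univ, true_and, mem_neighborFinset]
      rw [hf, hfv, cycleGraph_five_adj_iff]
    · rw [Finset.disjoint_filter]
      have hne : ∀ i : Fin 5, i + 1 ≠ i + 4 := by decide
      exact fun x _ h h' => hne i (h.symm.trans h')
  have h0 : #{x | f x = 1} + #{x | f x = 4} = d := hdeg 0
  have h1 : #{x | f x = 2} + #{x | f x = 0} = d := hdeg 1
  have h2 : #{x | f x = 3} + #{x | f x = 1} = d := hdeg 2
  have h3 : #{x | f x = 4} + #{x | f x = 2} = d := hdeg 3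
  have h4 : #{x | f x = 0} + #{x | f x = 3} = d := hdeg 4
  refine ⟨f, #{x | f x = 0}, hf, by omega, fun i => ?_⟩
  fin_cases i <;> simp only [Fin.zero_eta, Fin.mk_one, Fin.reduceFinMk] <;> omega

end Pentagon

/-! ### Edge-regular graphs without `2K₂` -/

theorem card_filter_comp_of_card_fiber_eq {α ι : Type*} [Fintype ι] [DecidableEq ι]
    (s : Finset α) (f : α → ι) {ρ : ℕ} (hf : ∀ i, #{x ∈ s | f x = i} = ρ) (P : ι → Prop)
    [DecidablePred P] : #{x ∈ s | P (f x)} = #{i | P i} * ρ := by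
  rw [card_eq_sum_card_fiberwise (f := f) (t := {i | P i}) (by intro x; simp), ← smul_eq_mul,
    ← sum_const]
  refine sum_congr rfl fun i hi => ?_
  rw [← hf i, filter_filter]
  congr 1
  ext x
  simp only [mem_filter, mem_univ, true_and] at hi ⊢
  exact ⟨by tauto, by rintro ⟨hx, rfl⟩; tauto⟩

section EdgeRegular

variable {V : Type*} {H : SimpleGraph V}

theorem not_adj_of_cliqueFree_four (h : H.CliqueFree 4) {r x y z : V} (hrx : H.Adj r x)
    (hry : H.Adj r y) (hrz : H.Adj r z) (hxy : H.Adj x y) (hxz : H.Adj x z) : ¬ H.Adj y z := by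
  classical
  exact fun hyz => h _ (is3Clique_triple_iff.2 ⟨hxy, hxz, hyz⟩ |>.insert (a := r) (by
    simp [hrx, hry, hrz]))

theorem cliqueFree_three_of_dominating (h2K2 : TwoKTwoFree H)
    (hdom : ∀ p q, H.Adj p q → ∃ t, ¬ H.Adj t p ∧ ¬ H.Adj t q) (hiso : ∀ t, ∃ s, H.Adj t s)
    (hloc : ∀ x y z s, H.Adj x y → H.Adj x z → H.Adj y z → H.Adj s x → H.Adj s y ∨ H.Adj s z) :
    H.CliqueFree 3 := by
  classical
  intro s hs
  obtain ⟨p, q, r, hpq, hpr, hqr, -⟩ := is3Clique_iff.1 hs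
  obtain ⟨t, htp, htq⟩ := hdom p q hpq
  have htr : ¬ H.Adj t r := fun h => by
    have := hloc r p q t hpr.symm hqr.symm hpq h
    tauto
  obtain ⟨u, htu⟩ := hiso t
  have hpair (x y : V) (hxy : H.Adj x y) (htx : ¬ H.Adj t x) (hty : ¬ H.Adj t y) :
      ¬ (H.Adj u x ∧ H.Adj u y) := by
    rintro ⟨hux, huy⟩
    have := hloc u x y t hux huy hxy htu
    tauto
  have h1 := h2K2 htu hpq
  have h2 := h2K2 htu hpr
  have h3 := h2K2 htu hqr
  have := hpair p q hpq htp htq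
  have := hpair p r hpr htp htr
  have := hpair q r hqr htq htr
  tauto

variable [Fintype V] [DecidableRel H.Adj]

/-- `f` exhibits the subgraph of `H` induced on the neighbours of `r` as a blow-up of the pentagon
with classes of size `ρ`. -/
structure IsLocalLabelling (H : SimpleGraph V) [DecidableRel H.Adj] (r : V) (f : V → Fin 5)
    (ρ : ℕ) : Prop where
  adj_iff : ∀ x y, H.Adj r x → H.Adj r y → (H.Adj x y ↔ (cycleGraph 5).Adj (f x) (f y))
  card_class : ∀ i, #{x ∈ H.neighborFinset r | f x = i} = ρ

theorem IsLocalLabelling.card_neighborFinset {r : V} {f : V → Fin 5} {ρ : ℕ}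
    (hf : IsLocalLabelling H r f ρ) : #(H.neighborFinset r) = 5 * ρ := by
  rw [card_eq_sum_card_fiberwise (f := f) (t := univ) (by simp)]
  simp [hf.card_class]

variable [DecidableEq V]

theorem two_mul_eq_iff_dominating (hK4 : H.CliqueFree 4) {m l : ℕ}
    (hreg : H.IsRegularOfDegree m)
    (hedge : ∀ p q, H.Adj p q → #(H.neighborFinset p ∩ H.neighborFinset q) = l) {p q r : V}
    (hrp : H.Adj r p) (hrq : H.Adj r q) (hpq : H.Adj p q) :
    2 * l = m ↔ ∀ s, H.Adj s r → H.Adj s p ∨ H.Adj s q := by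
  have hdisj : Disjoint (H.neighborFinset r ∩ H.neighborFinset p)
      (H.neighborFinset r ∩ H.neighborFinset q) := by
    rw [Finset.disjoint_left]
    simp only [mem_inter, mem_neighborFinset]
    exact fun s ⟨hrs, hps⟩ ⟨_, hqs⟩ => not_adj_of_cliqueFree_four hK4 hrp hrq hrs hpq hps hqs
  rw [two_mul]
  nth_rw 1 [← hedge r p hrp]
  rw [← hedge r q hrq, ← hreg.degree_eq r, ← card_union_of_disjoint hdisj,
    ← card_neighborFinset_eq_degree, ← inter_union_distrib_left]
  constructor
  · intro hcard s hs
    have heq := eq_of_subset_of_card_le inter_subset_left hcard.ge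
    have hmem : s ∈ H.neighborFinset r := (H.mem_neighborFinset r s).2 hs.symm
    rw [← heq] at hmem
    simpa [H.adj_comm s] using (mem_inter.1 hmem).2
  · intro hdom
    congr 1
    refine inter_eq_left.2 fun s hs => ?_
    simpa [H.adj_comm s] using hdom s ((H.mem_neighborFinset r s).1 hs).symm

theorem exists_isLocalLabelling (hK4 : H.CliqueFree 4) (h2K2 : TwoKTwoFree H) {l : ℕ}
    (hedge : ∀ p q, H.Adj p q → #(H.neighborFinset p ∩ H.neighborFinset q) = l) {p q r t : V}
    (hrp : H.Adj r p) (hrq : H.Adj r q) (hpq : H.Adj p q) (hrt : H.Adj r t) (htp : ¬ H.Adj t p)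
    (htq : ¬ H.Adj t q) : ∃ f ρ, l = 2 * ρ ∧ IsLocalLabelling H r f ρ := by
  have hfree : (H.induce (H.neighborSet r)).CliqueFree 3 := by
    intro s hs
    obtain ⟨x, y, z, hxy, hxz, hyz, -⟩ := is3Clique_iff.1 hs
    exact not_adj_of_cliqueFree_four hK4 x.2 y.2 z.2 hxy hxz hyz
  have hcard (P : V → Prop) [DecidablePred P] :
      #{x : H.neighborSet r | P x} = #{x ∈ H.neighborFinset r | P x} := by
    rw [← card_map (Function.Embedding.subtype _)]
    congr 1
    ext x
    simp [and_comm]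
  have hreg : (H.induce (H.neighborSet r)).IsRegularOfDegree l := fun x => by
    have hset : H.neighborFinset r ∩ H.neighborFinset x = {y ∈ H.neighborFinset r | H.Adj x y} := by
      ext
      simp
    rw [← hedge r x x.2, hset, ← hcard, ← card_neighborFinset_eq_degree, neighborFinset_eq_filter]
    rfl
  obtain ⟨f, ρ, hf, hl, hρ⟩ := exists_pentagon_labelling_of_isRegularOfDegree hfree
    (h2K2.induce _) hreg (p := ⟨p, hrp⟩) (q := ⟨q, hrq⟩) (t := ⟨t, hrt⟩) hpq htp htq
  let g (x : V) : Fin 5 := if hx : H.Adj r x then f ⟨x, hx⟩ else 0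
  have hg (x : H.neighborSet r) : g x = f x := dif_pos x.2
  refine ⟨g, ρ, hl, fun x y hx hy => ?_, fun i => ?_⟩
  · rw [hg ⟨x, hx⟩, hg ⟨y, hy⟩, ← hf]
    rfl
  · simp only [← hcard, hg, hρ]

section Labelling

variable {r t : V} {f : V → Fin 5} {ρ : ℕ}

/-- The number of common neighbours of `r` and `t` with label `i`, for a labelling `f` of the
neighbours of `r`. -/
def commonCount (H : SimpleGraph V) [DecidableRel H.Adj] (f : V → Fin 5) (r t : V) (i : Fin 5) :
    ℕ :=
  #{x ∈ H.neighborFinset r ∩ H.neighborFinset t | f x = i}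

theorem commonCount_pos_iff {i : Fin 5} :
    0 < commonCount H f r t i ↔ ∃ x, H.Adj r x ∧ H.Adj t x ∧ f x = i := by
  simp [commonCount, card_pos, Finset.Nonempty, and_assoc]

theorem card_inter_eq_sum_commonCount (f : V → Fin 5) (r t : V) :
    #(H.neighborFinset r ∩ H.neighborFinset t) = ∑ i, commonCount H f r t i :=
  card_eq_sum_card_fiberwise (by simp)

theorem card_sdiff_eq_of_commonCount_eq (hreg : H.IsRegularOfDegree (5 * ρ)) {i : Fin 5}
    (h0 : commonCount H f r t i = 0) (h1 : commonCount H f r t (i + 1) = ρ)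
    (h2 : commonCount H f r t (i + 2) = ρ) (h3 : commonCount H f r t (i + 3) = ρ)
    (h4 : commonCount H f r t (i + 4) = ρ) :
    #(H.neighborFinset t \ H.neighborFinset r) = ρ := by
  have hsum := card_inter_eq_sum_commonCount (H := H) f r t
  have hsplit := card_sdiff_add_card_inter (H.neighborFinset t) (H.neighborFinset r)
  rw [← Equiv.sum_comp (Equiv.addLeft i), Fin.sum_univ_five] at hsum
  simp only [Equiv.coe_addLeft, add_zero] at hsum
  rw [inter_comm, hsum, card_neighborFinset_eq_degree, hreg.degree_eq] at hsplit
  omega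

namespace IsLocalLabelling

theorem commonCount_le (hf : IsLocalLabelling H r f ρ) (i : Fin 5) :
    commonCount H f r t i ≤ ρ := by
  rw [← hf.card_class i]
  exact card_le_card (filter_subset_filter _ inter_subset_left)

theorem exists_adj_of_commonCount_lt (hf : IsLocalLabelling H r f ρ) {i : Fin 5}
    (h : commonCount H f r t i < ρ) : ∃ x, H.Adj r x ∧ ¬ H.Adj t x ∧ f x = i := by
  rw [← hf.card_class i] at h
  obtain ⟨x, hx, hx'⟩ := exists_mem_notMem_of_card_lt_card h
  simp only [mem_filter, mem_inter, mem_neighborFinset] at hx hx'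
  exact ⟨x, hx.1, by tauto, hx.2⟩

theorem commonCount_lt (hf : IsLocalLabelling H r f ρ) {x : V} (hrx : H.Adj r x)
    (htx : ¬ H.Adj t x) : commonCount H f r t (f x) < ρ := by
  rw [← hf.card_class (f x)]
  refine card_lt_card ((ssubset_iff_of_subset (filter_subset_filter _ inter_subset_left)).2 ?_)
  exact ⟨x, by simp [hrx], by simp [htx]⟩

theorem card_inter_inter_eq_commonCount (hf : IsLocalLabelling H r f ρ) {z : V}
    (hrz : H.Adj r z) : #(H.neighborFinset z ∩ (H.neighborFinset r ∩ H.neighborFinset t)) =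
      commonCount H f r t (f z + 1) + commonCount H f r t (f z + 4) := by
  rw [commonCount, commonCount, ← card_union_of_disjoint]
  · congr 1
    ext x
    simp only [mem_union, mem_inter, mem_filter, mem_neighborFinset]
    have (hrx : H.Adj r x) := (hf.adj_iff z x hrz hrx).trans cycleGraph_five_adj_iff
    tauto
  · have hne : ∀ i : Fin 5, i + 1 ≠ i + 4 := by decide
    exact Finset.disjoint_filter.2 fun x _ h h' => hne _ (h.symm.trans h')

theorem card_inter_inter_eq_or (hf : IsLocalLabelling H r f ρ) {x y : V} (hrx : H.Adj r x)
    (hry : H.Adj r y) (hxy : ¬ H.Adj x y) :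
    #(H.neighborFinset r ∩ (H.neighborFinset x ∩ H.neighborFinset y)) = ρ ∨
    #(H.neighborFinset r ∩ (H.neighborFinset x ∩ H.neighborFinset y)) = 2 * ρ := by
  have hset : H.neighborFinset r ∩ (H.neighborFinset x ∩ H.neighborFinset y) =
      {z ∈ H.neighborFinset r |
        (cycleGraph 5).Adj (f x) (f z) ∧ (cycleGraph 5).Adj (f y) (f z)} := by
    ext z
    simp only [mem_inter, mem_filter, mem_neighborFinset]
    exact and_congr_right fun hz => by rw [hf.adj_iff x z hrx hz, hf.adj_iff y z hry hz]
  have hcount : ∀ i j, ¬ (cycleGraph 5).Adj i j →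
      #{l | (cycleGraph 5).Adj i l ∧ (cycleGraph 5).Adj j l} = 1 ∨
      #{l | (cycleGraph 5).Adj i l ∧ (cycleGraph 5).Adj j l} = 2 := by decide
  rw [hset, card_filter_comp_of_card_fiber_eq _ f hf.card_class
    fun l => (cycleGraph 5).Adj (f x) l ∧ (cycleGraph 5).Adj (f y) l]
  rcases hcount _ _ ((hf.adj_iff x y hrx hry).not.1 hxy) with h | h <;> simp [h]

theorem commonCount_eq_zero (hf : IsLocalLabelling H r f ρ) (h2K2 : TwoKTwoFree H) {i : Fin 5}
    (h₁ : commonCount H f r t (i + 2) < ρ) (h₂ : commonCount H f r t (i + 3) < ρ) :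
    commonCount H f r t i = 0 := by
  obtain ⟨x, hrx, htx, hx⟩ := hf.exists_adj_of_commonCount_lt h₁
  obtain ⟨y, hry, hty, hy⟩ := hf.exists_adj_of_commonCount_lt h₂
  by_contra hne
  obtain ⟨z, hrz, htz, rfl⟩ := commonCount_pos_iff.1 (Nat.pos_of_ne_zero hne)
  have hlabels : ∀ i : Fin 5, (cycleGraph 5).Adj (i + 2) (i + 3) ∧
      ¬ (cycleGraph 5).Adj i (i + 2) ∧ ¬ (cycleGraph 5).Adj i (i + 3) := by decide
  obtain ⟨hxy, hzx, hzy⟩ := hlabels (f z)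
  rw [← hx, ← hy, ← hf.adj_iff x y hrx hry] at hxy
  rw [← hx, ← hf.adj_iff z x hrz hrx] at hzx
  rw [← hy, ← hf.adj_iff z y hrz hry] at hzy
  have := h2K2 htz hxy
  tauto

end IsLocalLabelling

theorem eq_zero_of_pentagon_counts {n : Fin 5 → ℕ} (hle : ∀ i, n i ≤ ρ)
    (hzero : ∀ i, n (i + 2) < ρ → n (i + 3) < ρ → n i = 0)
    (hsum : ∀ i, 0 < n i → n (i + 1) + n (i + 4) = ρ ∨ n (i + 1) + n (i + 4) = 2 * ρ)
    (hpos : ∃ i, 0 < n i) (h0 : n 0 < ρ) :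
    n 0 = 0 ∧ n 1 = ρ ∧ n 2 = ρ ∧ n 3 = ρ ∧ n 4 = ρ := by
  have hpos' : 0 < n 0 ∨ 0 < n 1 ∨ 0 < n 2 ∨ 0 < n 3 ∨ 0 < n 4 := by
    simpa [Fin.exists_fin_succ] using hpos
  have z0 : n 2 < ρ → n 3 < ρ → n 0 = 0 := hzero 0
  have z1 : n 3 < ρ → n 4 < ρ → n 1 = 0 := hzero 1
  have z2 : n 4 < ρ → n 0 < ρ → n 2 = 0 := hzero 2
  have z3 : n 0 < ρ → n 1 < ρ → n 3 = 0 := hzero 3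
  have z4 : n 1 < ρ → n 2 < ρ → n 4 = 0 := hzero 4
  have s0 : 0 < n 0 → n 1 + n 4 = ρ ∨ n 1 + n 4 = 2 * ρ := hsum 0
  have s1 : 0 < n 1 → n 2 + n 0 = ρ ∨ n 2 + n 0 = 2 * ρ := hsum 1
  have s2 : 0 < n 2 → n 3 + n 1 = ρ ∨ n 3 + n 1 = 2 * ρ := hsum 2
  have s3 : 0 < n 3 → n 4 + n 2 = ρ ∨ n 4 + n 2 = 2 * ρ := hsum 3
  have s4 : 0 < n 4 → n 0 + n 3 = ρ ∨ n 0 + n 3 = 2 * ρ := hsum 4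
  have := hle 1
  have := hle 2
  have := hle 3
  have := hle 4
  have h1 : n 1 = ρ := by omega
  have h4 : n 4 = ρ := by omega
  omega

theorem exists_eq_zero_of_pentagon_counts {n : Fin 5 → ℕ} (hle : ∀ i, n i ≤ ρ)
    (hzero : ∀ i, n (i + 2) < ρ → n (i + 3) < ρ → n i = 0)
    (hsum : ∀ i, 0 < n i → n (i + 1) + n (i + 4) = ρ ∨ n (i + 1) + n (i + 4) = 2 * ρ)
    (hpos : ∃ i, 0 < n i) (hlt : ∃ i, n i < ρ) :
    ∃ i, n i = 0 ∧ n (i + 1) = ρ ∧ n (i + 2) = ρ ∧ n (i + 3) = ρ ∧ n (i + 4) = ρ := by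
  obtain ⟨i, hi⟩ := hlt
  obtain ⟨j, hj⟩ := hpos
  refine ⟨i, ?_⟩
  simpa using eq_zero_of_pentagon_counts (n := fun k => n (i + k)) (fun _ => hle _)
    (fun k => by simpa [add_assoc] using hzero (i + k))
    (fun k => by simpa [add_assoc] using hsum (i + k)) ⟨j - i, by simpa using hj⟩
    (by simpa using hi)

theorem IsLocalLabelling.exists_commonCount_eq_zero (h2K2 : TwoKTwoFree H)
    (hf : IsLocalLabelling H r f ρ) (hlab : ∀ z, ∃ g, IsLocalLabelling H z g ρ)
    (htr : ¬ H.Adj t r) (hcommon : ∃ z, H.Adj r z ∧ H.Adj t z)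
    (hmissing : ∃ x, H.Adj r x ∧ ¬ H.Adj t x) :
    ∃ i, commonCount H f r t i = 0 ∧ commonCount H f r t (i + 1) = ρ ∧
      commonCount H f r t (i + 2) = ρ ∧ commonCount H f r t (i + 3) = ρ ∧
      commonCount H f r t (i + 4) = ρ := by
  refine exists_eq_zero_of_pentagon_counts hf.commonCount_le
    (fun i h₁ h₂ => hf.commonCount_eq_zero h2K2 h₁ h₂) (fun i hi => ?_) ?_ ?_
  · obtain ⟨z, hrz, htz, rfl⟩ := commonCount_pos_iff.1 hi
    obtain ⟨g, hg⟩ := hlab z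
    rw [← hf.card_inter_inter_eq_commonCount hrz]
    exact hg.card_inter_inter_eq_or hrz.symm htz.symm fun h => htr h.symm
  · obtain ⟨z, hrz, htz⟩ := hcommon
    exact ⟨f z, commonCount_pos_iff.2 ⟨z, hrz, htz, rfl⟩⟩
  · obtain ⟨x, hrx, htx⟩ := hmissing
    exact ⟨f x, hf.commonCount_lt hrx htx⟩

theorem IsLocalLabelling.adj_of_card_sdiff_eq (hf : IsLocalLabelling H r f ρ)
    (hedge : ∀ p q, H.Adj p q → #(H.neighborFinset p ∩ H.neighborFinset q) = 2 * ρ)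
    (hcard : #(H.neighborFinset t \ H.neighborFinset r) = ρ) {u x : V} (htu : H.Adj t u)
    (hru : ¬ H.Adj r u) (hrx : H.Adj r x) (htx : H.Adj t x)
    (hx : commonCount H f r t (f x + 1) + commonCount H f r t (f x + 4) = ρ) :
    H.Adj x u := by
  rw [← hf.card_inter_inter_eq_commonCount hrx, inter_comm (H.neighborFinset r),
    ← inter_assoc] at hx
  have hsplit := card_sdiff_add_card_inter (H.neighborFinset x ∩ H.neighborFinset t)
    (H.neighborFinset r)
  rw [hx, hedge x t htx.symm, inter_sdiff_assoc] at hsplit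
  have heq : H.neighborFinset x ∩ (H.neighborFinset t \ H.neighborFinset r) =
      H.neighborFinset t \ H.neighborFinset r :=
    eq_of_subset_of_card_le inter_subset_right (by omega)
  have hu : u ∈ H.neighborFinset t \ H.neighborFinset r := by simp [htu, hru]
  rw [← heq] at hu
  simpa using (mem_inter.1 hu).1

theorem IsLocalLabelling.false_of_commonCount_eq_zero (hf : IsLocalLabelling H r f ρ)
    (hρ : 0 < ρ) (hK4 : H.CliqueFree 4) (h2K2 : TwoKTwoFree H)
    (hreg : H.IsRegularOfDegree (5 * ρ))
    (hedge : ∀ p q, H.Adj p q → #(H.neighborFinset p ∩ H.neighborFinset q) = 2 * ρ)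
    (htr : ¬ H.Adj t r) {i : Fin 5} (h0 : commonCount H f r t i = 0)
    (h1 : commonCount H f r t (i + 1) = ρ) (h2 : commonCount H f r t (i + 2) = ρ)
    (h3 : commonCount H f r t (i + 3) = ρ) (h4 : commonCount H f r t (i + 4) = ρ) : False := by
  have hcard := card_sdiff_eq_of_commonCount_eq hreg h0 h1 h2 h3 h4
  obtain ⟨u, hu⟩ : (H.neighborFinset t \ H.neighborFinset r).Nonempty := by
    rw [← card_pos, hcard]
    exact hρ
  simp only [mem_sdiff, mem_neighborFinset] at hu
  obtain ⟨q, hrq, htq, hq⟩ := hf.exists_adj_of_commonCount_lt (h0.trans_lt hρ)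
  have hvertex (j : Fin 5) (hj : commonCount H f r t j = ρ) :
      ∃ x, H.Adj r x ∧ H.Adj t x ∧ f x = j := commonCount_pos_iff.1 (hj ▸ hρ)
  obtain ⟨x₁, hrx₁, htx₁, hx₁⟩ := hvertex _ h1
  obtain ⟨x₂, hrx₂, htx₂, hx₂⟩ := hvertex _ h2
  obtain ⟨x₃, hrx₃, htx₃, hx₃⟩ := hvertex _ h3
  obtain ⟨x₄, hrx₄, htx₄, hx₄⟩ := hvertex _ h4
  have hx₁u := hf.adj_of_card_sdiff_eq hedge hcard hu.1 hu.2 hrx₁ htx₁ (by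
    simp [hx₁, add_assoc, h2, h0])
  have hx₄u := hf.adj_of_card_sdiff_eq hedge hcard hu.1 hu.2 hrx₄ htx₄ (by
    simp [hx₄, add_assoc, h3, h0])
  have hlabels : ∀ i : Fin 5, (cycleGraph 5).Adj (i + 1) (i + 2) ∧
      (cycleGraph 5).Adj (i + 4) (i + 3) ∧ (cycleGraph 5).Adj (i + 2) (i + 3) ∧
      ¬ (cycleGraph 5).Adj (i + 2) i ∧ ¬ (cycleGraph 5).Adj (i + 3) i := by decide
  have hlabels := hlabels i
  rw [← hx₁, ← hx₂, ← hx₃, ← hx₄, ← hq, ← hf.adj_iff _ _ hrx₁ hrx₂, ← hf.adj_iff _ _ hrx₄ hrx₃,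
    ← hf.adj_iff _ _ hrx₂ hrx₃, ← hf.adj_iff _ _ hrx₂ hrq, ← hf.adj_iff _ _ hrx₃ hrq] at hlabels
  obtain ⟨h12, h43, h23, h2q, h3q⟩ := hlabels
  have hx₂u : ¬ H.Adj x₂ u := not_adj_of_cliqueFree_four hK4 htx₁ htx₂ hu.1 h12 hx₁u
  have hx₃u : ¬ H.Adj x₃ u := not_adj_of_cliqueFree_four hK4 htx₄ htx₃ hu.1 h43 hx₄u
  have hqu : ¬ H.Adj q u := fun h => by
    have := h2K2 h23 h
    tauto
  have := h2K2 hu.1 hrq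
  simp only [H.adj_comm u] at this
  tauto

end Labelling

theorem exists_isLocalLabelling_of_two_mul_ne (hK4 : H.CliqueFree 4) (h2K2 : TwoKTwoFree H)
    {m l : ℕ} (hreg : H.IsRegularOfDegree m)
    (hedge : ∀ p q, H.Adj p q → #(H.neighborFinset p ∩ H.neighborFinset q) = l) (hm : 0 < m)
    (hl : 0 < l) (hml : 2 * l ≠ m) (r : V) : ∃ f ρ, l = 2 * ρ ∧ IsLocalLabelling H r f ρ := by
  obtain ⟨p, hrp⟩ := (H.degree_pos_iff_exists_adj r).1 (by rwa [hreg.degree_eq])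
  obtain ⟨q, hq⟩ := card_pos.1 (hl.trans_eq (hedge r p hrp).symm)
  rw [mem_inter, mem_neighborFinset, mem_neighborFinset] at hq
  have hex := (two_mul_eq_iff_dominating hK4 hreg hedge hrp hq.1 hq.2).not.1 hml
  push Not at hex
  obtain ⟨s, hsr, hsp, hsq⟩ := hex
  exact exists_isLocalLabelling hK4 h2K2 hedge hrp hq.1 hq.2 hsr.symm hsp hsq

theorem cliqueFree_three_of_edgeRegular (hK4 : H.CliqueFree 4) (h2K2 : TwoKTwoFree H) {m l : ℕ}
    (hreg : H.IsRegularOfDegree m)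
    (hedge : ∀ p q, H.Adj p q → #(H.neighborFinset p ∩ H.neighborFinset q) = l)
    (hdom : ∀ p q, H.Adj p q → ∃ t, ¬ H.Adj t p ∧ ¬ H.Adj t q) : H.CliqueFree 3 := by
  by_contra htri
  obtain ⟨x, y, z, hxy, hxz, hyz⟩ : ∃ x y z, H.Adj x y ∧ H.Adj x z ∧ H.Adj y z := by
    simp only [CliqueFree, not_forall, not_not, is3Clique_iff] at htri
    obtain ⟨_, x, y, z, hxy, hxz, hyz, -⟩ := htri
    exact ⟨x, y, z, hxy, hxz, hyz⟩
  have hm : 0 < m := hreg.degree_eq x ▸ (H.degree_pos_iff_exists_adj x).2 ⟨y, hxy⟩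
  have hl : 0 < l := hedge x y hxy ▸ card_pos.2 ⟨z, by simp [hxz, hyz]⟩
  by_cases hml : 2 * l = m
  · exact htri (cliqueFree_three_of_dominating h2K2 hdom
      (fun r => (H.degree_pos_iff_exists_adj r).1 (by rwa [hreg.degree_eq]))
      fun a b c s hab hac hbc =>
        (two_mul_eq_iff_dominating hK4 hreg hedge hab hac hbc).1 hml s)
  have hlabelling := exists_isLocalLabelling_of_two_mul_ne hK4 h2K2 hreg hedge hm hl hml
  obtain ⟨f, ρ, rfl, hf⟩ := hlabelling x
  obtain ⟨t, htx, hty⟩ := hdom x y hxy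
  obtain ⟨a, hxa, hat⟩ := h2K2.exists_common_neighbor hreg hxy htx hty
  have hlabelling' (r : V) : ∃ g, IsLocalLabelling H r g ρ := by
    obtain ⟨g, σ, hσ, hg⟩ := hlabelling r
    obtain rfl : ρ = σ := by omega
    exact ⟨g, hg⟩
  obtain ⟨i, h0, h1, h2, h3, h4⟩ := hf.exists_commonCount_eq_zero h2K2 hlabelling' htx
    ⟨a, hxa, hat.symm⟩ ⟨y, hxy, hty⟩
  obtain rfl : m = 5 * ρ := by
    rw [← hreg.degree_eq x, ← card_neighborFinset_eq_degree, hf.card_neighborFinset]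
  exact hf.false_of_commonCount_eq_zero (by omega) hK4 h2K2 hreg hedge htx h0 h1 h2 h3 h4

end EdgeRegular

/-! ### Intersection numbers -/

theorem dist_eq_two_iff {V : Type*} {G : SimpleGraph V} {x y : V} :
    G.dist x y = 2 ↔ x ≠ y ∧ ¬ G.Adj x y ∧ ∃ z, G.Adj x z ∧ G.Adj y z := by
  rw [SimpleGraph.dist, ENat.toNat_eq_iff two_ne_zero]
  exact edist_eq_two_iff

/-- The adjacency operator on functions of the distance from a fixed vertex: if `F` depends only on
this distance, `F (dist x z) = τ (dist x z)`, then the sum of `F` over the neighbours of a vertex at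
distance `i` is `radialAdj b c τ i`. At `i = 0` the junk term `τ (0 - 1)` has coefficient
`c 0 = 0`. -/
def radialAdj (b c : ℕ → ℕ) (τ : ℕ → ℝ) (i : ℕ) : ℝ :=
  c i * τ (i - 1) + (b 0 - b i - c i) * τ i + b i * τ (i + 1)

namespace IsDRG

variable {V : Type*} [Fintype V] {G : SimpleGraph V} {D : ℕ} {b c : ℕ → ℕ}

theorem connected (h : IsDRG G D b c) : G.Connected := h.1

theorem dist_le (h : IsDRG G D b c) (x y : V) : G.dist x y ≤ D := h.2.2.1 x y

theorem dist_le_add_one (h : IsDRG G D b c) (x : V) {y z : V} (hyz : G.Adj y z) :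
    G.dist x z ≤ G.dist x y + 1 := by
  simpa [dist_eq_one_iff_adj.2 hyz] using h.connected.dist_triangle (u := x) (v := y) (w := z)

theorem ne_and_not_adj_of_dist_add_one_lt (h : IsDRG G D b c) {w r v : V}
    (hv : G.dist w r + 1 < G.dist w v) : r ≠ v ∧ ¬ G.Adj r v := by
  refine ⟨by rintro rfl; lia, fun hrv => ?_⟩
  have := h.dist_le_add_one w hrv
  lia

theorem c_zero (h : IsDRG G D b c) : c 0 = 0 := h.2.2.2.1

theorem c_one (h : IsDRG G D b c) : c 1 = 1 := h.2.2.2.2.1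

section Counting

variable [DecidableRel G.Adj]

theorem card_closer (h : IsDRG G D b c) (x y : V) :
    #{z ∈ G.neighborFinset y | G.dist x z + 1 = G.dist x y} = c (G.dist x y) := by
  rcases Nat.eq_zero_or_pos (G.dist x y) with h0 | h0
  · simp [h0, h.c_zero]
  · rw [← (h.2.2.2.2.2.2 _ (h.dist_le x y) x y rfl).1, ← Set.ncard_coe_finset]
    congr 1
    ext z
    simp only [coe_filter, mem_neighborFinset, Set.mem_ofPred_eq]
    lia

theorem card_farther (h : IsDRG G D b c) (x y : V) :
    #{z ∈ G.neighborFinset y | G.dist x z = G.dist x y + 1} = b (G.dist x y) := by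
  rw [← (h.2.2.2.2.2.2 _ (h.dist_le x y) x y rfl).2, ← Set.ncard_coe_finset]
  simp

theorem isRegularOfDegree (h : IsDRG G D b c) : G.IsRegularOfDegree (b 0) := by
  intro x
  have hcard := h.card_farther x x
  rwa [SimpleGraph.dist_self, filter_true_of_mem, card_neighborFinset_eq_degree] at hcard
  simp [SimpleGraph.dist_eq_one_iff_adj]

theorem sum_neighborFinset_eq_add_add {M : Type*} [AddCommMonoid M] (h : IsDRG G D b c)
    (f : V → M) (x y : V) :
    ∑ z ∈ G.neighborFinset y, f z =
      ∑ z ∈ G.neighborFinset y with G.dist x z + 1 = G.dist x y, f z +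
        ∑ z ∈ G.neighborFinset y with G.dist x z = G.dist x y, f z +
        ∑ z ∈ G.neighborFinset y with G.dist x z = G.dist x y + 1, f z := by
  simp only [sum_filter, ← sum_add_distrib]
  refine sum_congr rfl fun z hz => ?_
  have hyz := (G.mem_neighborFinset y z).1 hz
  have hle := h.dist_le_add_one x hyz
  have hge := h.dist_le_add_one x hyz.symm
  obtain heq | heq | heq : G.dist x z + 1 = G.dist x y ∨ G.dist x z = G.dist x y ∨
      G.dist x z = G.dist x y + 1 := by lia
  · rw [if_pos heq, if_neg (by lia), if_neg (by lia), add_zero, add_zero]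
  · rw [if_neg (by lia), if_pos heq, if_neg (by lia), zero_add, add_zero]
  · rw [if_neg (by lia), if_neg (by lia), if_pos heq, zero_add, zero_add]

theorem card_equidistant (h : IsDRG G D b c) (x y : V) :
    #{z ∈ G.neighborFinset y | G.dist x z = G.dist x y} + b (G.dist x y) + c (G.dist x y) =
      b 0 := by
  have hsum := h.sum_neighborFinset_eq_add_add (fun _ => 1) x y
  simp only [← card_eq_sum_ones, card_neighborFinset_eq_degree, h.isRegularOfDegree.degree_eq,
    h.card_closer, h.card_farther] at hsum
  lia

end Counting

theorem sum_neighborFinset_dist [DecidableRel G.Adj] (h : IsDRG G D b c) (τ : ℕ → ℝ) (x y : V) :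
    ∑ z ∈ G.neighborFinset y, τ (G.dist x z) = radialAdj b c τ (G.dist x y) := by
  have ha : (#{z ∈ G.neighborFinset y | G.dist x z = G.dist x y} : ℝ) =
      b 0 - b (G.dist x y) - c (G.dist x y) := by
    rw [← h.card_equidistant x y]
    push_cast
    ring
  rw [h.sum_neighborFinset_eq_add_add _ x y, radialAdj, ← ha, ← h.card_closer x y,
    ← h.card_farther x y]
  simp only [← nsmul_eq_mul, ← sum_const]
  refine congr_arg₂ _ (congr_arg₂ _ ?_ ?_) ?_ <;> refine sum_congr rfl fun z hz => ?_ <;>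
    rw [mem_filter] at hz <;> congr 1 <;> lia

theorem card_inter_of_adj [DecidableRel G.Adj] [DecidableEq V] (h : IsDRG G D b c) {x y : V}
    (hxy : G.Adj x y) : #(G.neighborFinset x ∩ G.neighborFinset y) + 1 + b 1 = b 0 := by
  have hcard := h.card_equidistant x y
  rw [dist_eq_one_iff_adj.2 hxy, h.c_one] at hcard
  rw [← hcard, inter_comm, ← filter_mem_eq_inter]
  simp only [mem_neighborFinset, dist_eq_one_iff_adj]
  ring

theorem card_inter_of_dist_eq_two [DecidableRel G.Adj] [DecidableEq V] (h : IsDRG G D b c)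
    {x y : V} (hxy : G.dist x y = 2) : #(G.neighborFinset x ∩ G.neighborFinset y) = c 2 := by
  rw [← hxy, ← h.card_closer x y, inter_comm, ← filter_mem_eq_inter]
  simp [hxy, dist_eq_one_iff_adj]

theorem exists_closer (h : IsDRG G D b c) {x y : V} (hxy : x ≠ y) :
    ∃ z, G.Adj y z ∧ G.dist x z + 1 = G.dist x y := by
  obtain ⟨p, hp⟩ := h.connected.exists_walk_length_eq_dist y x
  cases p with
  | nil => exact absurd rfl hxy
  | @cons _ z _ hyz q =>
    have hqx := SimpleGraph.dist_le q
    have hstep := h.dist_le_add_one x hyz.symm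
    rw [SimpleGraph.Walk.length_cons] at hp
    exact ⟨z, hyz, by grind [SimpleGraph.dist_comm]⟩

theorem exists_dist_eq (h : IsDRG G D b c) {i : ℕ} (hi : i ≤ D) : ∃ x y, G.dist x y = i := by
  obtain ⟨x, y, hxy⟩ := h.2.1
  obtain ⟨p, hp⟩ := h.connected.exists_walk_length_eq_dist x y
  refine ⟨x, p.getVert i, ?_⟩
  rw [← length_eq_dist_of_subwalk hp (p.isSubwalk_take i), Walk.take_length]
  lia

theorem c_pos (h : IsDRG G D b c) {i : ℕ} (h1 : 1 ≤ i) (hi : i ≤ D) : 0 < c i := by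
  classical
  obtain ⟨x, y, rfl⟩ := h.exists_dist_eq hi
  obtain ⟨z, hyz, hz⟩ := h.exists_closer (x := x) (y := y) (by rintro rfl; simp at h1)
  rw [← h.card_closer x y, card_pos]
  exact ⟨z, by simp [hyz, hz]⟩

theorem b_pos (h : IsDRG G D b c) {i : ℕ} (hi : i < D) : 0 < b i := by
  classical
  obtain ⟨x, y, hxy⟩ := h.exists_dist_eq (i := i + 1) hi
  obtain ⟨z, hyz, hz⟩ := h.exists_closer (x := x) (y := y) (by rintro rfl; simp at hxy)
  obtain rfl : G.dist x z = i := by lia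
  rw [← h.card_farther x z, card_pos]
  exact ⟨y, by simp [hyz.symm, hz]⟩

theorem exists_farther (h : IsDRG G D b c) {x y : V} (hxy : G.dist x y < D) :
    ∃ z, G.Adj y z ∧ G.dist x z = G.dist x y + 1 := by
  classical
  obtain ⟨z, hz⟩ := card_pos.1 ((h.b_pos hxy).trans_eq (h.card_farther x y).symm)
  exact ⟨z, by simpa using hz⟩

theorem exists_dist_eq_of_le (h : IsDRG G D b c) (x : V) {i : ℕ} (hi : i ≤ D) :
    ∃ y, G.dist x y = i := by
  induction i with
  | zero => exact ⟨x, SimpleGraph.dist_self⟩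
  | succ i ih =>
    obtain ⟨y, rfl⟩ := ih (by lia)
    obtain ⟨z, -, hz⟩ := h.exists_farther (x := x) (y := y) (by lia)
    exact ⟨z, hz⟩

theorem b_add_c_le (h : IsDRG G D b c) {i : ℕ} (hi : i ≤ D) : b i + c i ≤ b 0 := by
  classical
  obtain ⟨x, y, rfl⟩ := h.exists_dist_eq hi
  have hcard := h.card_equidistant x y
  lia

end IsDRG

/-! ### Local graphs -/

theorem card_mul_succ_le_card_of_isIndepSet {W : Type*} [Fintype W] {Γ : SimpleGraph W}
    [DecidableRel Γ.Adj] {m : ℕ} (hreg : Γ.IsRegularOfDegree m) {s : Finset W}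
    (hs : Γ.IsIndepSet s)
    (hdisj : (s : Set W).Pairwise fun p q => Disjoint (Γ.neighborFinset p) (Γ.neighborFinset q)) :
    #s * (m + 1) ≤ Fintype.card W := by
  classical
  calc #s * (m + 1) = ∑ p ∈ s, #(insert p (Γ.neighborFinset p)) := by
        simp [card_insert_of_notMem, hreg.degree_eq]
    _ = #(s.biUnion fun p => insert p (Γ.neighborFinset p)) := by
        refine (card_biUnion fun p hp q hq hpq => ?_).symm
        have hnadj := hs hp hq hpq
        simp [hpq.symm, hnadj, hdisj hp hq hpq, Γ.adj_comm q p]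
    _ ≤ Fintype.card W := card_le_univ _

theorem card_inter_compl_of_not_adj {W : Type*} [Fintype W] [DecidableEq W] {Γ : SimpleGraph W}
    [DecidableRel Γ.Adj] {m : ℕ} (hreg : Γ.IsRegularOfDegree m) {p q : W} (hpq : p ≠ q)
    (hnadj : ¬ Γ.Adj p q) :
    #(Γᶜ.neighborFinset p ∩ Γᶜ.neighborFinset q) =
      Fintype.card W - (2 * (m + 1) - #(Γ.neighborFinset p ∩ Γ.neighborFinset q)) := by
  have hclosed (p : W) : #(insert p (Γ.neighborFinset p)) = m + 1 := by
    simp [card_insert_of_notMem, hreg.degree_eq]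
  have hinter : insert p (Γ.neighborFinset p) ∩ insert q (Γ.neighborFinset q) =
      Γ.neighborFinset p ∩ Γ.neighborFinset q := by
    ext z
    grind [mem_neighborFinset, Γ.adj_comm]
  have hcompl : Γᶜ.neighborFinset p ∩ Γᶜ.neighborFinset q =
      (insert p (Γ.neighborFinset p) ∪ insert q (Γ.neighborFinset q))ᶜ := by
    ext z
    simp only [mem_inter, mem_neighborFinset, compl_adj, mem_compl, mem_union, mem_insert]
    tauto
  rw [hcompl, card_compl, card_union, hinter, hclosed, hclosed, two_mul]

/-- The complement of the local graph of `G` at `y`, i.e. of the subgraph induced on the neighbours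
of `y`; the `t`-claws of `G` with centre `y` are the `t`-cliques of this graph. -/
abbrev localCompl {V : Type*} (G : SimpleGraph V) (y : V) : SimpleGraph (G.neighborSet y) :=
  (G.induce (G.neighborSet y))ᶜ

theorem hasClaw_iff_exists_not_cliqueFree {V : Type*} {G : SimpleGraph V} {t : ℕ} :
    HasClaw G t ↔ ∃ y, ¬ (localCompl G y).CliqueFree t := by
  classical
  refine exists_congr fun y => ?_
  rw [CliqueFree, not_forall_not]
  constructor
  · rintro ⟨s, rfl, hadj, hs⟩
    refine ⟨s.subtype (· ∈ G.neighborSet y), fun p hp q hq hpq => ?_, ?_⟩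
    · rw [mem_coe, mem_subtype] at hp hq
      exact ⟨hpq, hs hp hq (Subtype.coe_injective.ne hpq)⟩
    · rw [card_subtype]
      exact congr_arg card (filter_true_of_mem hadj)
  · rintro ⟨s, hs⟩
    refine ⟨s.map (.subtype _), by rw [card_map, hs.card_eq], fun p hp => ?_, ?_⟩
    · obtain ⟨p, -, rfl⟩ := mem_map.1 hp
      exact p.2
    · rw [coe_map]
      rintro _ ⟨p, hp, rfl⟩ _ ⟨q, hq, rfl⟩ hpq
      exact (hs.isClique hp hq (ne_of_apply_ne _ hpq)).2

theorem dist_of_localCompl_adj {V : Type*} {G : SimpleGraph V} {y : V} {p q : G.neighborSet y}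
    (hpq : (localCompl G y).Adj p q) : G.dist p.1 q.1 = 2 :=
  dist_eq_two_iff.2 ⟨mt Subtype.ext hpq.ne, hpq.2, y, p.2.symm, q.2.symm⟩

theorem twoKTwoFree_localCompl {V : Type*} {G : SimpleGraph V} (hG : ¬ HasQuadrangle G) (y : V) :
    TwoKTwoFree (localCompl G y) := by
  intro p q x z hpq hxz
  by_contra! hcross
  obtain ⟨hpx, hpz, hqx, hqz⟩ := hcross
  refine hG ⟨p, x, q, z, dist_of_localCompl_adj hpq, dist_of_localCompl_adj hxz, ?_, ?_, ?_, ?_⟩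
  · by_contra hadj
    exact hpx ⟨fun heq => hpz (heq ▸ hxz), hadj⟩
  · by_contra hadj
    exact hqx ⟨fun heq => hqz (heq ▸ hxz), fun hqx' => hadj hqx'.symm⟩
  · by_contra hadj
    exact hqz ⟨fun heq => hqx (heq ▸ hxz.symm), hadj⟩
  · by_contra hadj
    exact hpz ⟨fun heq => hpx (heq ▸ hxz.symm), fun hpz' => hadj hpz'.symm⟩

namespace IsDRG

variable {V : Type*} [Fintype V] {G : SimpleGraph V} {D : ℕ} {b c : ℕ → ℕ}

section Local

variable [DecidableRel G.Adj]

theorem isRegularOfDegree_local (h : IsDRG G D b c) (y : V) :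
    (G.induce (G.neighborSet y)).IsRegularOfDegree (b 0 - 1 - b 1) := by
  classical
  intro p
  have hcard := h.card_inter_of_adj p.2
  have hdeg : (G.induce (G.neighborSet y)).degree p =
      #(G.neighborFinset y ∩ G.neighborFinset p) := by
    rw [← card_neighborFinset_eq_degree, ← card_map (.subtype (· ∈ G.neighborSet y))]
    congr 1
    ext z
    simp [and_comm]
  lia

theorem card_local_inter_of_not_adj [DecidableEq V] (h : IsDRG G D b c) (hG : ¬ HasQuadrangle G)
    {y : V} {p q : G.neighborSet y} (hpq : (localCompl G y).Adj p q) :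
    #((G.induce (G.neighborSet y)).neighborFinset p ∩
      (G.induce (G.neighborSet y)).neighborFinset q) = c 2 - 1 := by
  have hdist : G.dist p.1 q.1 = 2 := dist_of_localCompl_adj hpq
  rw [← h.card_inter_of_dist_eq_two hdist, ← card_map (.subtype (· ∈ G.neighborSet y)),
    ← card_erase_of_mem (a := y) (by simp [p.2.symm, q.2.symm])]
  congr 1
  ext z
  simp only [mem_map, mem_erase, mem_inter, mem_neighborFinset]
  constructor
  · rintro ⟨z, ⟨hpz, hqz⟩, rfl⟩
    exact ⟨z.2.ne', hpz, hqz⟩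
  · rintro ⟨hzy, hpz, hqz⟩
    have hyz : G.Adj y z := by
      by_contra hyz
      exact hG ⟨p, y, q, z, hdist, dist_eq_two_iff.2 ⟨hzy.symm, hyz, p, p.2, hpz.symm⟩, p.2.symm,
        q.2, hqz, hpz.symm⟩
    exact ⟨⟨z, hyz⟩, ⟨hpz, hqz⟩, rfl⟩

end Local

theorem two_le_c_two (h : IsDRG G D b c) (hk : 3 * b 1 < 2 * b 0) (hG : ¬ HasQuadrangle G)
    (h3 : HasClaw G 3) : 2 ≤ c 2 := by
  classical
  obtain ⟨y, hy⟩ := hasClaw_iff_exists_not_cliqueFree.1 h3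
  obtain ⟨s, hs⟩ := not_forall_not.1 hy
  by_contra! hc
  have hcard := card_mul_succ_le_card_of_isIndepSet (h.isRegularOfDegree_local y) (s := s)
    ((isClique_compl _).1 hs.isClique) fun p hp q hq hpq => by
      beta_reduce
      rw [disjoint_iff_inter_eq_empty, ← card_eq_zero,
        h.card_local_inter_of_not_adj hG (hs.isClique hp hq hpq)]
      lia
  rw [hs.card_eq, card_neighborSet_eq_degree, h.isRegularOfDegree.degree_eq] at hcard
  lia

theorem hasQuadrangle (h : IsDRG G D b c) (hk : 3 * b 1 < 2 * b 0) (h3 : HasClaw G 3)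
    (h4 : ¬ HasClaw G 4) : HasQuadrangle G := by
  classical
  by_contra hG
  have hc := h.two_le_c_two hk hG h3
  obtain ⟨y, hy⟩ := hasClaw_iff_exists_not_cliqueFree.1 h3
  have hK4 : (localCompl G y).CliqueFree 4 :=
    not_not.1 fun hfree => h4 (hasClaw_iff_exists_not_cliqueFree.2 ⟨y, hfree⟩)
  have hreg := h.isRegularOfDegree_local y
  have hedge (p q : G.neighborSet y) (hpq : (localCompl G y).Adj p q) :=
    (card_inter_compl_of_not_adj hreg hpq.1 hpq.2).trans
      (by rw [h.card_local_inter_of_not_adj hG hpq])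
  refine hy (cliqueFree_three_of_edgeRegular hK4 (twoKTwoFree_localCompl hG y) hreg.compl hedge
    fun p q hpq => ?_)
  have hcard := h.card_local_inter_of_not_adj hG hpq
  obtain ⟨t, ht⟩ := card_pos.1 (hcard.symm ▸ Nat.sub_pos_of_lt hc)
  rw [mem_inter, mem_neighborFinset, mem_neighborFinset] at ht
  exact ⟨t, fun htp => htp.2 ht.1.symm, fun htq => htq.2 ht.2.symm⟩

end IsDRG

/-! ### The Bose–Mesner algebra and Terwilliger's inequality -/

/-- The matrix whose entries are a function of the distance. For a distance-regular graph these
matrices form the Bose–Mesner algebra, and `distMatrix G (Pi.single i 1)` is the distance-`i`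
matrix. -/
noncomputable def distMatrix {V : Type*} (G : SimpleGraph V) : (ℕ → ℝ) →ₗ[ℝ] Matrix V V ℝ where
  toFun σ := .of fun x y => σ (G.dist x y)
  map_add' _ _ := rfl
  map_smul' _ _ := rfl

section DistMatrix

variable {V : Type*} {G : SimpleGraph V}

theorem distMatrix_apply (σ : ℕ → ℝ) (x y : V) : distMatrix G σ x y = σ (G.dist x y) := rfl

theorem transpose_distMatrix (σ : ℕ → ℝ) : (distMatrix G σ).transpose = distMatrix G σ := by
  ext x y
  rw [Matrix.transpose_apply, distMatrix_apply, distMatrix_apply, SimpleGraph.dist_comm]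

theorem distMatrix_single_mul_apply_self [Fintype V] (m : ℕ) (τ : ℕ → ℝ) (x : V) :
    (distMatrix G (Pi.single m 1) * distMatrix G τ) x x = #{y | G.dist x y = m} * τ m := by
  rw [Matrix.mul_apply, card_filter, Nat.cast_sum, sum_mul]
  refine sum_congr rfl fun y _ => ?_
  rw [distMatrix_apply, distMatrix_apply, SimpleGraph.dist_comm (u := y), Pi.single_apply]
  split_ifs with hy <;> simp [hy]

theorem distMatrix_mul_apply [Fintype V] (σ τ : ℕ → ℝ) (x z : V) :
    (distMatrix G σ * distMatrix G τ) x z = ∑ y, σ (G.dist x y) * τ (G.dist z y) := by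
  simp only [Matrix.mul_apply, distMatrix_apply, SimpleGraph.dist_comm (v := z)]

end DistMatrix

theorem radialAdj_single_zero {b c : ℕ → ℕ} (hc : c 0 = 0) :
    radialAdj b c (Pi.single 0 1) = (c 1 : ℝ) • Pi.single 1 1 := by
  ext m
  rcases m with _ | _ | m <;> simp [radialAdj, hc]

theorem radialAdj_single_succ {b c : ℕ → ℕ} (hc : c 0 = 0) (i : ℕ) :
    radialAdj b c (Pi.single (i + 1) 1) = (c (i + 2) : ℝ) • Pi.single (i + 2) 1 +
      (b 0 - b (i + 1) - c (i + 1) : ℝ) • Pi.single (i + 1) 1 + (b i : ℝ) • Pi.single i 1 := by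
  ext m
  simp only [radialAdj, Pi.single_apply, Pi.add_apply, Pi.smul_apply, smul_eq_mul]
  obtain hm | rfl | rfl | rfl | hm : m < i ∨ m = i ∨ m = i + 1 ∨ m = i + 2 ∨ i + 2 < m := by lia
  · simp [show ¬ m - 1 = i + 1 by lia, show ¬ m = i + 1 by lia, show ¬ m = i by lia,
      show ¬ m = i + 2 by lia]
  · rcases m with _ | m
    · simp [hc]
    · simp [show ¬ m = m + 1 + 1 by lia]
  · simp
  · simp
  · simp [show ¬ m - 1 = i + 1 by lia, show ¬ m = i + 1 by lia, show ¬ m = i by lia,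
      show ¬ m = i + 2 by lia]

theorem radialAdj_single_apply_succ {b c : ℕ → ℕ} (i : ℕ) :
    radialAdj b c (Pi.single i 1) (i + 1) = c (i + 1) := by
  simp [radialAdj, show ¬ i + 1 + 1 = i by lia]

theorem radialAdj_single_apply_of_add_one_lt {b c : ℕ → ℕ} {i j : ℕ} (hij : i + 1 < j) :
    radialAdj b c (Pi.single i 1) j = 0 := by
  simp [radialAdj, show ¬ j - 1 = i by lia, show ¬ j = i by lia, show ¬ j + 1 = i by lia]

theorem radialAdj_radialAdj_single_apply_succ {b c : ℕ → ℕ} (hc : c 0 = 0) (i : ℕ) :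
    radialAdj b c (radialAdj b c (Pi.single i 1)) (i + 1) =
      c (i + 1) * (b 0 - b i - c i + (b 0 - b (i + 1) - c (i + 1))) := by
  rw [radialAdj, radialAdj_single_apply_succ,
    radialAdj_single_apply_of_add_one_lt (j := i + 1 + 1) (by lia), Nat.add_sub_cancel]
  have hi : radialAdj b c (Pi.single i 1) i = b 0 - b i - c i := by
    rcases i with _ | i <;> simp [radialAdj, hc]
  rw [hi]
  ring

theorem radialAdj_radialAdj_single_apply_add_two {b c : ℕ → ℕ} (i : ℕ) :
    radialAdj b c (radialAdj b c (Pi.single i 1)) (i + 2) = c (i + 2) * c (i + 1) := by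
  rw [radialAdj, show i + 2 - 1 = i + 1 from rfl, radialAdj_single_apply_succ,
    radialAdj_single_apply_of_add_one_lt (j := i + 2) (by lia),
    radialAdj_single_apply_of_add_one_lt (j := i + 2 + 1) (by lia)]
  ring

namespace IsDRG

variable {V : Type*} [Fintype V] {G : SimpleGraph V} {D : ℕ} {b c : ℕ → ℕ}

theorem adjMatrix_mul_distMatrix [DecidableRel G.Adj] (h : IsDRG G D b c) (τ : ℕ → ℝ) :
    G.adjMatrix ℝ * distMatrix G τ = distMatrix G (radialAdj b c τ) := by
  ext x y
  simp only [adjMatrix_mul_apply, distMatrix_apply, SimpleGraph.dist_comm (v := y),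
    h.sum_neighborFinset_dist]

theorem distMatrix_single_eq_zero (h : IsDRG G D b c) {i : ℕ} (hi : D < i) :
    distMatrix G (Pi.single i 1) = 0 := by
  ext x y
  have hxy : G.dist x y ≠ i := ((h.dist_le x y).trans_lt hi).ne
  simp [distMatrix_apply, hxy]

theorem distMatrix_single_zero [DecidableEq V] (h : IsDRG G D b c) :
    distMatrix G (Pi.single 0 1) = 1 := by
  ext x y
  simp only [distMatrix_apply, Matrix.one_apply, Pi.single_apply, h.connected.dist_eq_zero_iff]

theorem smul_distMatrix_single_succ_succ [DecidableRel G.Adj] (h : IsDRG G D b c) (i : ℕ) :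
    (c (i + 2) : ℝ) • distMatrix G (Pi.single (i + 2) 1) =
      G.adjMatrix ℝ * distMatrix G (Pi.single (i + 1) 1) -
        (b 0 - b (i + 1) - c (i + 1) : ℝ) • distMatrix G (Pi.single (i + 1) 1) -
        (b i : ℝ) • distMatrix G (Pi.single i 1) := by
  rw [h.adjMatrix_mul_distMatrix, radialAdj_single_succ h.c_zero]
  simp only [map_add, map_smul]
  abel

theorem distMatrix_single_mul_mem_range (h : IsDRG G D b c) (i : ℕ) (τ : ℕ → ℝ) :
    distMatrix G (Pi.single i 1) * distMatrix G τ ∈ LinearMap.range (distMatrix G) := by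
  classical
  have hadj {M} (hM : M ∈ LinearMap.range (distMatrix G)) :
      G.adjMatrix ℝ * M ∈ LinearMap.range (distMatrix G) := by
    obtain ⟨σ, rfl⟩ := hM
    exact ⟨_, (h.adjMatrix_mul_distMatrix σ).symm⟩
  induction i using Nat.twoStepInduction with
  | zero =>
    rw [h.distMatrix_single_zero, Matrix.one_mul]
    exact ⟨τ, rfl⟩
  | one =>
    have hsingle : distMatrix G (Pi.single 1 1) =
        G.adjMatrix ℝ * distMatrix G (Pi.single 0 1) := by
      rw [h.adjMatrix_mul_distMatrix, radialAdj_single_zero h.c_zero, h.c_one]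
      simp
    rw [hsingle, h.distMatrix_single_zero, Matrix.mul_one]
    exact hadj ⟨τ, rfl⟩
  | more i ih₀ ih₁ =>
    obtain hi | hi := lt_or_ge D (i + 2)
    · rw [h.distMatrix_single_eq_zero hi, Matrix.zero_mul]
      exact Submodule.zero_mem _
    have hc : (c (i + 2) : ℝ) ≠ 0 := Nat.cast_ne_zero.2 (h.c_pos (by lia) hi).ne'
    rw [← Submodule.smul_mem_iff _ hc, ← Matrix.smul_mul, h.smul_distMatrix_single_succ_succ,
      Matrix.sub_mul, Matrix.sub_mul, Matrix.mul_assoc, Matrix.smul_mul, Matrix.smul_mul]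
    exact sub_mem (sub_mem (hadj ih₁) (Submodule.smul_mem _ _ ih₁)) (Submodule.smul_mem _ _ ih₀)

theorem distMatrix_mul_adjMatrix [DecidableRel G.Adj] (h : IsDRG G D b c) (σ : ℕ → ℝ) :
    distMatrix G σ * G.adjMatrix ℝ = distMatrix G (radialAdj b c σ) := by
  rw [← transpose_distMatrix (radialAdj b c σ), ← h.adjMatrix_mul_distMatrix,
    Matrix.transpose_mul, transpose_distMatrix, transpose_adjMatrix]

theorem distMatrix_mul_radialAdj (h : IsDRG G D b c) {σ τ ρ : ℕ → ℝ}
    (hρ : distMatrix G σ * distMatrix G τ = distMatrix G ρ) :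
    distMatrix G σ * distMatrix G (radialAdj b c τ) = distMatrix G (radialAdj b c ρ) := by
  classical
  rw [← h.distMatrix_mul_adjMatrix, ← Matrix.mul_assoc, hρ, h.distMatrix_mul_adjMatrix]

theorem card_sphere_mul_radialAdj (h : IsDRG G D b c) {m : ℕ} {τ ρ : ℕ → ℝ}
    (hρ : distMatrix G (Pi.single m 1) * distMatrix G τ = distMatrix G ρ) (x : V) :
    #{y | G.dist x y = m} * radialAdj b c τ m = b 0 * ρ 1 := by
  rw [← distMatrix_single_mul_apply_self, h.distMatrix_mul_radialAdj hρ, distMatrix_apply,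
    SimpleGraph.dist_self, radialAdj, h.c_zero]
  simp

theorem card_sphere_mul_radialAdj_radialAdj (h : IsDRG G D b c) {m : ℕ} {τ ρ : ℕ → ℝ}
    (hρ : distMatrix G (Pi.single m 1) * distMatrix G τ = distMatrix G ρ) (x : V) :
    #{y | G.dist x y = m} * radialAdj b c (radialAdj b c τ) m =
      b 0 * (#{y | G.dist x y = m} * τ m + (b 0 - b 1 - 1) * ρ 1 + b 1 * ρ 2) := by
  rw [h.card_sphere_mul_radialAdj (h.distMatrix_mul_radialAdj hρ), radialAdj,
    ← distMatrix_single_mul_apply_self, hρ, distMatrix_apply, SimpleGraph.dist_self, h.c_one]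
  simp

theorem card_sphere_succ (h : IsDRG G D b c) (x : V) (i : ℕ) :
    (#{y | G.dist x y = i + 1} * c (i + 1) : ℝ) = #{y | G.dist x y = i} * b i := by
  classical
  obtain ⟨ρ, hρ⟩ := h.distMatrix_single_mul_mem_range i (Pi.single (i + 1) 1)
  have hρ' : distMatrix G (Pi.single (i + 1) 1) * distMatrix G (Pi.single i 1) =
      distMatrix G ρ := by
    rw [← transpose_distMatrix ρ, hρ, Matrix.transpose_mul, transpose_distMatrix,
      transpose_distMatrix]
  have hup := h.card_sphere_mul_radialAdj hρ.symm x
  have hdown := h.card_sphere_mul_radialAdj hρ' x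
  have hb : radialAdj b c (Pi.single (i + 1) 1) i = b i := by simp [radialAdj]
  have hc := radialAdj_single_apply_succ (b := b) (c := c) i
  rw [hb] at hup
  rw [hc] at hdown
  exact hdown.trans hup.symm

theorem card_sphere_pos (h : IsDRG G D b c) (x : V) {i : ℕ} (hi : i ≤ D) :
    0 < #{y | G.dist x y = i} := by
  obtain ⟨y, hy⟩ := h.exists_dist_eq_of_le x hi
  exact card_pos.2 ⟨y, by simpa using hy⟩

theorem mul_mul_apply_two_of_add_two (h : IsDRG G D b c) {i : ℕ} {ρ : ℕ → ℝ}
    (hρ : distMatrix G (Pi.single (i + 2) 1) * distMatrix G (Pi.single i 1) = distMatrix G ρ)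
    (x : V) : b 0 * b 1 * ρ 2 = #{y | G.dist x y = i + 2} * (c (i + 2) * c (i + 1)) := by
  have hone := h.card_sphere_mul_radialAdj hρ x
  have htwo := h.card_sphere_mul_radialAdj_radialAdj hρ x
  rw [radialAdj_single_apply_of_add_one_lt (by lia)] at hone
  rw [radialAdj_radialAdj_single_apply_add_two, Pi.single_eq_of_ne (by lia)] at htwo
  linear_combination (b 0 - b 1 - 1 : ℝ) * hone - htwo

/-- Each term on the left counts vertices at prescribed distances from two corners of the
quadrangle; the inequality already holds for the contribution of a single vertex. -/
theorem quadrangle_count_le (h : IsDRG G D b c) {α β γ β' : V} (hαβ : G.Adj α β)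
    (hβγ : G.Adj β γ) (hγβ' : G.Adj γ β') (hβ'α : G.Adj β' α) (i : ℕ) :
    let P (m l : ℕ) := distMatrix G (Pi.single m 1) * distMatrix G (Pi.single l 1)
    P (i + 2) i β β' + P (i + 3) (i + 1) β β' + P (i + 2) (i + 1) β β' + P (i + 3) (i + 1) γ α +
      P (i + 2) i α γ ≤ P (i + 2) (i + 1) β α + P (i + 2) (i + 1) α β' := by
  simp only [distMatrix_mul_apply, ← sum_add_distrib]
  refine sum_le_sum fun y _ => ?_
  have hdist {u v : V} (huv : G.Adj u v) :
      G.dist u y ≤ G.dist v y + 1 ∧ G.dist v y ≤ G.dist u y + 1 := by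
    rw [SimpleGraph.dist_comm (u := u), SimpleGraph.dist_comm (u := v)]
    exact ⟨h.dist_le_add_one y huv.symm, h.dist_le_add_one y huv⟩
  have h₁ := hdist hαβ
  have h₂ := hdist hβγ
  have h₃ := hdist hγβ'
  have h₄ := hdist hβ'α
  simp only [Pi.single_apply]
  split_ifs <;> first | lia | norm_num

/-- Terwilliger's inequality `cᵢ - bᵢ ≥ cᵢ₋₁ - bᵢ₋₁ + a₁ + 2` for a distance-regular graph with a
quadrangle, shifted and rearranged so that no subscript is negative. -/
theorem terwilliger (h : IsDRG G D b c) (hquad : HasQuadrangle G) {i : ℕ} (hi : i + 2 ≤ D) :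
    (b 0 : ℝ) - b 1 + 1 + c (i + 1) + b (i + 2) ≤ c (i + 2) + b (i + 1) := by
  obtain ⟨α, β, γ, β', hαγ, hββ', hαβ, hβγ, hγβ', hβ'α⟩ := hquad
  obtain ⟨p, hp⟩ := h.distMatrix_single_mul_mem_range (i + 2) (Pi.single (i + 1) 1)
  obtain ⟨q, hq⟩ := h.distMatrix_single_mul_mem_range (i + 2) (Pi.single i 1)
  obtain ⟨r, hr⟩ := h.distMatrix_single_mul_mem_range (i + 3) (Pi.single (i + 1) 1)
  have hcount : 2 * q 2 + 2 * r 2 + p 2 ≤ 2 * p 1 := by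
    have hquad := h.quadrangle_count_le hαβ hβγ hγβ' hβ'α i
    simp only [← hp, ← hq, ← hr, distMatrix_apply, hββ', SimpleGraph.dist_comm (u := γ), hαγ,
      dist_eq_one_iff_adj.2 hαβ.symm, dist_eq_one_iff_adj.2 hβ'α.symm] at hquad
    linarith
  set κ : ℝ := (#{y | G.dist α y = i + 2} : ℝ)
  have hκ : 0 < κ * c (i + 2) :=
    mul_pos (Nat.cast_pos.2 (h.card_sphere_pos α hi)) (Nat.cast_pos.2 (h.c_pos (by lia) hi))
  have hp1 : κ * c (i + 2) = b 0 * p 1 := by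
    simpa only [radialAdj_single_apply_succ] using h.card_sphere_mul_radialAdj hp.symm α
  have hp2 := h.card_sphere_mul_radialAdj_radialAdj hp.symm α
  rw [radialAdj_radialAdj_single_apply_succ h.c_zero, Pi.single_eq_of_ne (by lia)] at hp2
  have hq2 := h.mul_mul_apply_two_of_add_two hq.symm α
  have hr2 : b 0 * b 1 * r 2 = κ * b (i + 2) * c (i + 2) := by
    rw [h.mul_mul_apply_two_of_add_two hr.symm α, ← mul_assoc, h.card_sphere_succ]
  have hscaled := mul_le_mul_of_nonneg_left hcount (by positivity : (0 : ℝ) ≤ b 0 * b 1)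
  have hfactored : κ * c (i + 2) * (2 * c (i + 1) + 2 * b (i + 2) + (b 0 - b (i + 1) - c (i + 1) +
      (b 0 - b (i + 2) - c (i + 2))) - (b 0 - b 1 - 1)) ≤ κ * c (i + 2) * (2 * b 1) := by
    linear_combination hscaled - 2 * hq2 - 2 * hr2 + hp2 - (b 0 + b 1 - 1 : ℝ) * hp1
  linarith [le_of_mul_le_mul_left hfactored hκ]

end IsDRG

/-! ### Clique decompositions and the smallest eigenvalue -/

/-- A family of cliques (the *lines*) which partitions the edges of `G`. -/
structure IsCliqueDecomposition {V : Type*} (G : SimpleGraph V) (𝓛 : Finset (Finset V)) : Prop where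
  isClique : ∀ L ∈ 𝓛, G.IsClique (L : Set V)
  eq_of_mem : ∀ L ∈ 𝓛, ∀ M ∈ 𝓛, ∀ u v, u ≠ v → u ∈ L → v ∈ L → u ∈ M → v ∈ M → L = M
  exists_mem : ∀ u v, G.Adj u v → ∃ L ∈ 𝓛, u ∈ L ∧ v ∈ L

/-- The incidence matrix of the points `V` with the blocks `𝓛`. -/
def blockIncMatrix {V : Type*} [DecidableEq V] (𝓛 : Finset (Finset V)) : Matrix V 𝓛 ℝ :=
  .of fun v L => if v ∈ L.1 then 1 else 0

section BlockIncMatrix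

variable {V : Type*} [DecidableEq V] {𝓛 : Finset (Finset V)}

theorem transpose_blockIncMatrix_mulVec_apply [Fintype V] (f : V → ℝ) (L : 𝓛) :
    ((blockIncMatrix 𝓛).transpose.mulVec f) L = ∑ v ∈ L.1, f v := by
  simp [blockIncMatrix, Matrix.mulVec, dotProduct]

theorem blockIncMatrix_mul_transpose_apply (u v : V) :
    (blockIncMatrix 𝓛 * (blockIncMatrix 𝓛).transpose) u v = #{L ∈ 𝓛 | u ∈ L ∧ v ∈ L} := by
  simp only [blockIncMatrix, Matrix.mul_apply, Matrix.transpose_apply, Matrix.of_apply,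
    ite_mul, one_mul, zero_mul, ← ite_and,
    sum_coe_sort 𝓛 fun L => if u ∈ L ∧ v ∈ L then (1 : ℝ) else 0, sum_boole]

theorem card_lt_card_of_card_filter_mem_eq [Fintype V] [Nonempty V] {m : ℕ}
    (hm : ∀ v, #{L ∈ 𝓛 | v ∈ L} = m) (hlt : ∀ L ∈ 𝓛, m < #L) : #𝓛 < Fintype.card V := by
  have hle : #𝓛 * (m + 1) ≤ Fintype.card V * m :=
    card_mul_le_card_mul (fun L v => v ∈ L)
      (fun L hL => by simpa [bipartiteAbove] using hlt L hL) fun v _ => (hm v).le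
  have hpos : 0 < Fintype.card V := Fintype.card_pos
  nlinarith

end BlockIncMatrix

namespace IsCliqueDecomposition

variable {V : Type*} [DecidableEq V] {G : SimpleGraph V} [DecidableRel G.Adj]
  {𝓛 : Finset (Finset V)} {m : ℕ}

theorem sum_card_erase [Fintype V] (h : IsCliqueDecomposition G 𝓛) (y : V) :
    ∑ L ∈ 𝓛 with y ∈ L, #(L.erase y) = G.degree y := by
  rw [← card_biUnion, ← card_neighborFinset_eq_degree]
  · congr 1
    ext z
    simp only [mem_biUnion, mem_filter, mem_erase, mem_neighborFinset]
    constructor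
    · rintro ⟨L, ⟨hL, hy⟩, hne, hz⟩
      exact h.isClique L hL hy hz hne.symm
    · intro hyz
      obtain ⟨L, hL, hy, hz⟩ := h.exists_mem y z hyz
      exact ⟨L, ⟨hL, hy⟩, hyz.ne', hz⟩
  · intro L hL M hM hne
    rw [mem_coe, mem_filter] at hL hM
    refine Finset.disjoint_left.2 fun z hz hz' => hne ?_
    rw [mem_erase] at hz hz'
    exact h.eq_of_mem L hL.1 M hM.1 y z hz.1.symm hL.2 hz.2 hM.2 hz'.2

theorem blockIncMatrix_mul_transpose (h : IsCliqueDecomposition G 𝓛)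
    (hm : ∀ v, #{L ∈ 𝓛 | v ∈ L} = m) :
    blockIncMatrix 𝓛 * (blockIncMatrix 𝓛).transpose = G.adjMatrix ℝ + (m : ℝ) • 1 := by
  ext u v
  rw [blockIncMatrix_mul_transpose_apply, Matrix.add_apply, adjMatrix_apply, Matrix.smul_apply]
  obtain rfl | huv := eq_or_ne u v
  · simp [hm]
  rw [Matrix.one_apply_ne huv, smul_zero, add_zero]
  split_ifs with hadj
  · obtain ⟨L, hL, hu, hv⟩ := h.exists_mem u v hadj
    rw [Nat.cast_eq_one, card_eq_one]
    refine ⟨L, eq_singleton_iff_unique_mem.2 ⟨by simp [hL, hu, hv], fun M hM => ?_⟩⟩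
    rw [mem_filter] at hM
    exact h.eq_of_mem M hM.1 L hL u v huv hM.2.1 hM.2.2 hu hv
  · rw [Nat.cast_eq_zero, card_eq_zero, filter_eq_empty_iff]
    exact fun L hL hmem => hadj (h.isClique L hL hmem.1 hmem.2 huv)

theorem adjMatrix_mulVec_eq_iff [Fintype V] (h : IsCliqueDecomposition G 𝓛)
    (hm : ∀ v, #{L ∈ 𝓛 | v ∈ L} = m) (f : V → ℝ) :
    (G.adjMatrix ℝ).mulVec f = (-m : ℝ) • f ↔ ∀ L ∈ 𝓛, ∑ v ∈ L, f v = 0 := by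
  calc (G.adjMatrix ℝ).mulVec f = (-m : ℝ) • f
      ↔ (blockIncMatrix 𝓛 * (blockIncMatrix 𝓛).transpose).mulVec f = 0 := by
        rw [h.blockIncMatrix_mul_transpose hm, Matrix.add_mulVec, Matrix.smul_mulVec,
          Matrix.one_mulVec, neg_smul, eq_neg_iff_add_eq_zero]
    _ ↔ (blockIncMatrix 𝓛).transpose.mulVec f = 0 := by
        rw [← Matrix.conjTranspose_eq_transpose_of_trivial,
          Matrix.self_mul_conjTranspose_mulVec_eq_zero]
    _ ↔ ∀ L ∈ 𝓛, ∑ v ∈ L, f v = 0 := by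
        simp only [funext_iff, transpose_blockIncMatrix_mulVec_apply, Subtype.forall, Pi.zero_apply]

theorem isAdjEigenvalue_neg [Fintype V] (h : IsCliqueDecomposition G 𝓛)
    (hm : ∀ v, #{L ∈ 𝓛 | v ∈ L} = m) (hlt : #𝓛 < Fintype.card V) : IsAdjEigenvalue G (-m) := by
  have hker : LinearMap.ker (blockIncMatrix 𝓛).transpose.mulVecLin ≠ ⊥ :=
    LinearMap.ker_ne_bot_of_finrank_lt (by simpa using hlt)
  obtain ⟨f, hf, hne⟩ := (Submodule.ne_bot_iff _).1 hker
  rw [LinearMap.mem_ker, Matrix.mulVecLin_apply] at hf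
  refine ⟨f, hne, (h.adjMatrix_mulVec_eq_iff hm f).2 fun L hL => ?_⟩
  rw [← transpose_blockIncMatrix_mulVec_apply f ⟨L, hL⟩, hf, Pi.zero_apply]

end IsCliqueDecomposition

namespace IsDRG

variable {V : Type*} [Fintype V] {G : SimpleGraph V} {D : ℕ} {b c : ℕ → ℕ}

theorem adjMatrix_mulVec_dist [DecidableRel G.Adj] (h : IsDRG G D b c) {θ : ℝ} {τ : ℕ → ℝ}
    (hτ : ∀ i ≤ D, radialAdj b c τ i = θ * τ i) (x : V) :
    (G.adjMatrix ℝ).mulVec (fun y => τ (G.dist x y)) = θ • fun y => τ (G.dist x y) := by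
  ext y
  rw [adjMatrix_mulVec_apply, h.sum_neighborFinset_dist, hτ _ (h.dist_le x y)]
  rfl

theorem distMatrix_radialAdj_mulVec [DecidableRel G.Adj] (h : IsDRG G D b c) {θ : ℝ} {f : V → ℝ}
    (hf : (G.adjMatrix ℝ).mulVec f = θ • f) (σ : ℕ → ℝ) :
    (distMatrix G (radialAdj b c σ)).mulVec f = θ • (distMatrix G σ).mulVec f := by
  rw [← h.distMatrix_mul_adjMatrix, ← Matrix.mulVec_mulVec, hf, Matrix.mulVec_smul]

/-- The value of `τ` at `i` is the average of an eigenvector over a sphere of radius `i`. -/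
theorem exists_radialAdj_eq [DecidableRel G.Adj] (h : IsDRG G D b c) {θ : ℝ}
    (hθ : IsAdjEigenvalue G θ) :
    ∃ τ : ℕ → ℝ, τ 0 ≠ 0 ∧ ∀ i ≤ D, radialAdj b c τ i = θ * τ i := by
  classical
  obtain ⟨f, hne, hf⟩ := hθ
  obtain ⟨x, hx⟩ := Function.ne_iff.1 hne
  let S (σ : ℕ → ℝ) : ℝ := (distMatrix G σ).mulVec f x
  let κ (i : ℕ) : ℝ := #{y | G.dist x y = i}
  have hS (i : ℕ) : S (radialAdj b c (Pi.single i 1)) = θ * S (Pi.single i 1) := by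
    simp [S, h.distMatrix_radialAdj_mulVec hf]
  have hκ {i : ℕ} (hi : i ≤ D) : κ i ≠ 0 := Nat.cast_ne_zero.2 (h.card_sphere_pos x hi).ne'
  have hrec (i : ℕ) : κ (i + 1) * c (i + 1) = κ i * b i := h.card_sphere_succ x i
  obtain ⟨τ, hτ⟩ : ∃ τ : ℕ → ℝ, ∀ i, S (Pi.single i 1) = κ i * τ i := by
    refine ⟨fun i => S (Pi.single i 1) / κ i, fun i => ?_⟩
    obtain hi | hi := le_or_gt i D
    · exact (mul_div_cancel₀ _ (hκ hi)).symm
    · simp [S, h.distMatrix_single_eq_zero hi]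
  refine ⟨τ, fun hτ0 => hx ?_, fun i hi => mul_left_cancel₀ (hκ hi) ?_⟩
  · simpa [S, h.distMatrix_single_zero, hτ0] using hτ 0
  rw [mul_left_comm, ← hτ, ← hS, radialAdj]
  obtain _ | i := i
  · have hexp : S (radialAdj b c (Pi.single 0 1)) = c 1 * S (Pi.single 1 1) := by
      simp only [radialAdj_single_zero h.c_zero, S, map_smul, Matrix.smul_mulVec, Pi.smul_apply,
        smul_eq_mul]
    rw [hexp, hτ, h.c_zero]
    push_cast
    linear_combination -τ 1 * hrec 0
  · have hexp : S (radialAdj b c (Pi.single (i + 1) 1)) =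
        c (i + 2) * S (Pi.single (i + 2) 1) +
          (b 0 - b (i + 1) - c (i + 1)) * S (Pi.single (i + 1) 1) + b i * S (Pi.single i 1) := by
      simp only [radialAdj_single_succ h.c_zero, S, map_add, map_smul, Matrix.add_mulVec,
        Matrix.smul_mulVec, Pi.add_apply, Pi.smul_apply, smul_eq_mul]
    rw [hexp, hτ, hτ, hτ, Nat.add_sub_cancel]
    linear_combination τ i * hrec i - τ (i + 2) * hrec (i + 1)

end IsDRG

/-! ### Lines -/

theorem card_add_card_add_card_le {α : Type*} [DecidableEq α] (s t u : Finset α) :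
    #s + #t + #u ≤ #(s ∪ t ∪ u) + #(s ∩ t) + #(s ∩ u) + #(t ∩ u) := by
  have hst := card_union_add_card_inter s t
  have hstu := card_union_add_card_inter (s ∪ t) u
  have hinter : #((s ∪ t) ∩ u) ≤ #(s ∩ u) + #(t ∩ u) := by
    rw [union_inter_distrib_right]
    exact card_union_le _ _
  lia

section FarSet

variable {V : Type*} [Fintype V] [DecidableEq V] (G : SimpleGraph V) [DecidableRel G.Adj]

/-- For `p` adjacent to `y`, the closed neighbourhood of `p` in the local graph of `G` at `y`. -/
def nearSet (y p : V) : Finset V := insert p (G.neighborFinset y ∩ G.neighborFinset p)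

/-- The neighbours of `y` outside the closed neighbourhoods of `p` and `q`; for nonadjacent `p` and
`q` adjacent to `y` these are the vertices which extend `p`, `q` to a 3-claw with centre `y`. -/
def farSet (y p q : V) : Finset V := G.neighborFinset y \ (nearSet G y p ∪ nearSet G y q)

variable {G}

theorem nearSet_subset {y p : V} (hyp : G.Adj y p) : nearSet G y p ⊆ G.neighborFinset y :=
  insert_subset (by simpa using hyp) inter_subset_left

theorem mem_farSet {y p q z : V} :
    z ∈ farSet G y p q ↔ G.Adj y z ∧ (z ≠ p ∧ ¬ G.Adj p z) ∧ z ≠ q ∧ ¬ G.Adj q z := by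
  simp only [farSet, nearSet, mem_sdiff, mem_union, mem_insert, mem_inter, mem_neighborFinset]
  tauto

theorem isClique_farSet (h4 : ¬ HasClaw G 4) {y p q : V} (hyp : G.Adj y p) (hyq : G.Adj y q)
    (hne : p ≠ q) (hpq : ¬ G.Adj p q) : G.IsClique (farSet G y p q : Set V) := by
  intro u hu v hv huv
  rw [mem_coe, mem_farSet] at hu hv
  by_contra huv'
  refine h4 ⟨y, {u, v, p, q}, ?_, ?_, ?_⟩
  · simp [*]
  · simp [*]
  · have : Std.Symm fun y z => ¬ G.Adj y z := ⟨fun _ _ => mt Adj.symm⟩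
    simp [Set.pairwise_insert_of_symm, adj_comm, *]

theorem isClique_insert_farSet (h4 : ¬ HasClaw G 4) {y p q : V} (hyp : G.Adj y p)
    (hyq : G.Adj y q) (hne : p ≠ q) (hpq : ¬ G.Adj p q) :
    G.IsClique (insert y (farSet G y p q) : Set V) :=
  (isClique_farSet h4 hyp hyq hne hpq).insert fun _ hz _ => (mem_farSet.1 hz).1

end FarSet

/-- A maximal clique which is large enough for two lines to meet in at most one vertex, and for at
most three of them to pass through a vertex. -/
structure IsLine {V : Type*} (G : SimpleGraph V) (b c : ℕ → ℕ) (L : Finset V) : Prop where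
  maximal : Maximal G.IsClique (L : Set V)
  two_mul_b_one_lt : 2 * b 1 < #L + b 0
  c_two_add_lt : c 2 + 2 * b 0 + 3 < #L + 3 * b 1

namespace IsDRG

variable {V : Type*} [Fintype V] {G : SimpleGraph V} {D : ℕ} {b c : ℕ → ℕ}

theorem card_add_b_one_le (h : IsDRG G D b c) {y t : V} (hyt : G.Adj y t) {s : Finset V}
    (hs : ∀ v ∈ s, v ≠ y → v ≠ t → G.Adj y v ∧ G.Adj t v) : #s + b 1 ≤ b 0 + 1 := by
  classical
  have hsub : s ⊆ insert y (insert t (G.neighborFinset y ∩ G.neighborFinset t)) := by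
    intro v hv
    simp only [mem_insert, mem_inter, mem_neighborFinset, or_iff_not_imp_left]
    exact hs v hv
  have hcard := h.card_inter_of_adj hyt
  have hle := (card_le_card hsub).trans (card_insert_le _ _)
  have hle' := card_insert_le t (G.neighborFinset y ∩ G.neighborFinset t)
  lia

theorem card_inter_le_c_two (h : IsDRG G D b c) [DecidableEq V] {L M : Finset V}
    (hL : G.IsClique (L : Set V)) (hM : Maximal G.IsClique (M : Set V)) (hLM : ¬ L ⊆ M)
    (hne : (L ∩ M).Nonempty) : #(L ∩ M) ≤ c 2 := by
  classical
  obtain ⟨u, hu, huM⟩ := not_subset.1 hLM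
  obtain ⟨v, hv, hvu, hadj⟩ : ∃ v ∈ M, v ≠ u ∧ ¬ G.Adj u v := by
    by_contra! hcon
    refine huM (hM.le_of_ge (hM.prop.insert (a := u) fun v hv huv => hcon v hv huv.symm)
      (Set.subset_insert _ _) (Set.mem_insert _ _))
  have hmem (z : V) (hz : z ∈ L ∩ M) : G.Adj u z ∧ G.Adj v z := by
    rw [mem_inter] at hz
    have huz : u ≠ z := by rintro rfl; exact huM hz.2
    refine ⟨hL hu hz.1 huz, hM.prop hv hz.2 ?_⟩
    rintro rfl
    exact hadj (hL hu hz.1 huz)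
  obtain ⟨z, hz⟩ := hne
  have hdist : G.dist u v = 2 := dist_eq_two_iff.2 ⟨hvu.symm, hadj, z, hmem z hz⟩
  rw [← h.card_inter_of_dist_eq_two hdist]
  exact card_le_card fun z hz => by simpa using hmem z hz

theorem eq_of_isLine (h : IsDRG G D b c) {L M : Finset V} (hL : IsLine G b c L)
    (hM : IsLine G b c M) {y t : V} (hyt : y ≠ t) (hyL : y ∈ L) (htL : t ∈ L) (hyM : y ∈ M)
    (htM : t ∈ M) : L = M := by
  classical
  have hadj : G.Adj y t := hL.maximal.prop hyL htL hyt
  have hunion : #(L ∪ M) + b 1 ≤ b 0 + 1 := by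
    refine h.card_add_b_one_le hadj fun v hv hvy hvt => ?_
    obtain hv | hv := mem_union.1 hv
    · exact ⟨hL.maximal.prop hyL hv hvy.symm, hL.maximal.prop htL hv hvt.symm⟩
    · exact ⟨hM.maximal.prop hyM hv hvy.symm, hM.maximal.prop htM hv hvt.symm⟩
  have hLM : L ⊆ M := by
    by_contra hLM
    have hinter := h.card_inter_le_c_two hL.maximal.prop hM.maximal hLM
      ⟨y, mem_inter.2 ⟨hyL, hyM⟩⟩
    have hcard := card_union_add_card_inter L M
    have := hL.two_mul_b_one_lt
    have := hM.c_two_add_lt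
    lia
  exact hLM.antisymm (hL.maximal.le_of_ge hM.maximal.prop hLM)

section Counting

variable [DecidableEq V] [DecidableRel G.Adj]

theorem card_nearSet (h : IsDRG G D b c) {y p : V} (hyp : G.Adj y p) :
    #(nearSet G y p) + b 1 = b 0 := by
  rw [nearSet, card_insert_of_notMem (by simp), h.card_inter_of_adj hyp]

theorem card_farSet (h : IsDRG G D b c) {y p q : V} (hyp : G.Adj y p) (hyq : G.Adj y q) :
    #(farSet G y p q) + b 0 = 2 * b 1 + #(nearSet G y p ∩ nearSet G y q) := by
  have hsdiff :=
    card_sdiff_add_card_eq_card (union_subset (nearSet_subset hyp) (nearSet_subset hyq))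
  rw [← farSet, card_neighborFinset_eq_degree, h.isRegularOfDegree.degree_eq] at hsdiff
  have hunion := card_union_add_card_inter (nearSet G y p) (nearSet G y q)
  have hp := h.card_nearSet hyp
  have hq := h.card_nearSet hyq
  lia

theorem three_mul_b_one_le (h : IsDRG G D b c) {y p q t : V} (hyp : G.Adj y p) (hyq : G.Adj y q)
    (hyt : G.Adj y t) :
    3 * b 1 ≤ b 0 + (#(farSet G y p q) + (#(farSet G y p t) + #(farSet G y q t))) := by
  have hunion : #(nearSet G y p ∪ nearSet G y q ∪ nearSet G y t) ≤ b 0 := by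
    rw [← h.isRegularOfDegree.degree_eq y, ← card_neighborFinset_eq_degree]
    exact card_le_card (union_subset (union_subset (nearSet_subset hyp) (nearSet_subset hyq))
      (nearSet_subset hyt))
  have hbonferroni := card_add_card_add_card_le (nearSet G y p) (nearSet G y q) (nearSet G y t)
  have := h.card_nearSet hyp
  have := h.card_nearSet hyq
  have := h.card_nearSet hyt
  have := h.card_farSet hyp hyq
  have := h.card_farSet hyp hyt
  have := h.card_farSet hyq hyt
  lia

theorem b_two_le_card_farSet (h : IsDRG G D b c) {w y p q : V} (hwy : G.dist w y = 2)
    (hwp : G.Adj w p) (hwq : G.Adj w q) : b 2 ≤ #(farSet G y p q) := by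
  rw [← hwy, ← h.card_farther w y]
  refine card_le_card fun z hz => ?_
  rw [mem_filter, mem_neighborFinset, hwy] at hz
  have hne {r : V} (hwr : G.Adj w r) : z ≠ r ∧ ¬ G.Adj r z := by
    have hr : G.dist w r = 1 := dist_eq_one_iff_adj.2 hwr
    exact (h.ne_and_not_adj_of_dist_add_one_lt (w := w) (by lia)).imp_left Ne.symm
  exact mem_farSet.2 ⟨hz.1, hne hwp, hne hwq⟩

theorem c_two_le_card_inter_nearSet_add_one (h : IsDRG G D b c) {y p q : V} (hpq : G.dist p q = 2)
    (hy : ∀ w, G.Adj p w → G.Adj q w → w ≠ y → G.Adj y w) :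
    c 2 ≤ #(nearSet G y p ∩ nearSet G y q) + 1 := by
  rw [← h.card_inter_of_dist_eq_two hpq]
  refine le_trans (card_le_card fun w hw => ?_) (card_insert_le y _)
  rw [mem_inter, mem_neighborFinset, mem_neighborFinset] at hw
  by_cases hwy : w = y
  · exact mem_insert.2 (.inl hwy)
  · simp [nearSet, hw, hy w hw.1 hw.2 hwy]

theorem c_two_add_le_card_farSet (h : IsDRG G D b c) (hk : 3 * b 0 + 5 ≤ 5 * b 1)
    (hc : c 2 + 2 * b 0 + 3 ≤ b 2 + 3 * b 1) {y p q : V} (hyp : G.Adj y p) (hyq : G.Adj y q)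
    (hne : p ≠ q) (hpq : ¬ G.Adj p q) : c 2 + 2 * b 0 + 3 ≤ #(farSet G y p q) + 3 * b 1 := by
  have hdist : G.dist p q = 2 := dist_eq_two_iff.2 ⟨hne, hpq, y, hyp.symm, hyq.symm⟩
  by_cases hy : ∀ w, G.Adj p w → G.Adj q w → w ≠ y → G.Adj y w
  · have := h.c_two_le_card_inter_nearSet_add_one hdist hy
    have := h.card_farSet hyp hyq
    lia
  · push Not at hy
    obtain ⟨w, hpw, hqw, hwy, hyw⟩ := hy
    have := h.b_two_le_card_farSet
      (dist_eq_two_iff.2 ⟨hwy, mt Adj.symm hyw, p, hpw.symm, hyp⟩) hpw.symm hqw.symm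
    lia

theorem exists_isLine_farSet_subset (h : IsDRG G D b c) (h4 : ¬ HasClaw G 4)
    (hk : 3 * b 0 + 5 ≤ 5 * b 1) (hc : c 2 + 2 * b 0 + 3 ≤ b 2 + 3 * b 1) {y p q : V}
    (hyp : G.Adj y p) (hyq : G.Adj y q) (hne : p ≠ q) (hpq : ¬ G.Adj p q) :
    ∃ L, IsLine G b c L ∧ y ∈ L ∧ farSet G y p q ⊆ L.erase y := by
  obtain ⟨L, hsub, hL⟩ := Finite.exists_le_maximal (isClique_insert_farSet h4 hyp hyq hne hpq)
  lift L to Finset V using L.toFinite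
  have hy : y ∉ farSet G y p q := fun hy => (mem_farSet.1 hy).1.ne rfl
  have hsub' : insert y (farSet G y p q) ⊆ L := by exact_mod_cast hsub
  have hcard := card_le_card hsub'
  rw [card_insert_of_notMem hy] at hcard
  have hfar := h.card_farSet hyp hyq
  have hfar' := h.c_two_add_le_card_farSet hk hc hyp hyq hne hpq
  rw [insert_subset_iff] at hsub'
  exact ⟨L, ⟨hL, by lia, by lia⟩, hsub'.1, subset_erase.2 ⟨hsub'.2, hy⟩⟩

end Counting

theorem exists_coclique_of_adj (h : IsDRG G D b c) (hk : b 0 < 2 * b 1) {y t : V}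
    (hyt : G.Adj y t) : ∃ p q, G.Adj y p ∧ G.Adj y q ∧ (p ≠ q ∧ ¬ G.Adj p q) ∧
      (p ≠ t ∧ ¬ G.Adj p t) ∧ q ≠ t ∧ ¬ G.Adj q t := by
  classical
  have hfar {p q : V} (hyp : G.Adj y p) (hyq : G.Adj y q) : (farSet G y p q).Nonempty := by
    rw [← card_pos]
    have := h.card_farSet hyp hyq
    lia
  obtain ⟨p, hp⟩ := hfar hyt hyt
  obtain ⟨hyp, ⟨hnep, hpt⟩, -⟩ := mem_farSet.1 hp
  obtain ⟨q, hq⟩ := hfar hyp hyt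
  obtain ⟨hyq, ⟨hne, hpq⟩, hneq, hqt⟩ := mem_farSet.1 hq
  exact ⟨p, q, hyp, hyq, ⟨hne.symm, hpq⟩, ⟨hnep, mt Adj.symm hpt⟩, hneq, mt Adj.symm hqt⟩

/-- Three lines through `y`, spanned by the vertices of a 3-coclique in its neighbourhood, cover
enough of the neighbours of `y` to leave no room for a fourth one. -/
theorem exists_three_isLine (h : IsDRG G D b c) (h4 : ¬ HasClaw G 4)
    (hk : 3 * b 0 + 5 ≤ 5 * b 1) (hc : c 2 + 2 * b 0 + 3 ≤ b 2 + 3 * b 1) [DecidableEq V]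
    {y t : V} (hyt : G.Adj y t) :
    ∃ T : Finset (Finset V), #T = 3 ∧ (∀ L ∈ T, IsLine G b c L ∧ y ∈ L) ∧ (∃ L ∈ T, t ∈ L) ∧
      3 * b 1 ≤ b 0 + ∑ L ∈ T, #(L.erase y) := by
  classical
  obtain ⟨p, q, hyp, hyq, ⟨hne, hpq⟩, ⟨hnep, hpt⟩, hneq, hqt⟩ :=
    h.exists_coclique_of_adj (by lia) hyt
  obtain ⟨L, hL, hyL, hsubL⟩ := h.exists_isLine_farSet_subset h4 hk hc hyp hyq hne hpq
  obtain ⟨M, hM, hyM, hsubM⟩ := h.exists_isLine_farSet_subset h4 hk hc hyp hyt hnep hpt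
  obtain ⟨N, hN, hyN, hsubN⟩ := h.exists_isLine_farSet_subset h4 hk hc hyq hyt hneq hqt
  have htL : t ∈ L := mem_of_mem_erase
    (hsubL (mem_farSet.2 ⟨hyt, ⟨hnep.symm, hpt⟩, hneq.symm, hqt⟩))
  have hqM : q ∈ M := mem_of_mem_erase
    (hsubM (mem_farSet.2 ⟨hyq, ⟨hne.symm, hpq⟩, hneq, mt Adj.symm hqt⟩))
  have hpN : p ∈ N := mem_of_mem_erase
    (hsubN (mem_farSet.2 ⟨hyp, ⟨hne, mt Adj.symm hpq⟩, hnep, mt Adj.symm hpt⟩))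
  have hLM : L ≠ M := by rintro rfl; exact hqt (hL.maximal.prop hqM htL hneq)
  have hLN : L ≠ N := by rintro rfl; exact hpt (hL.maximal.prop hpN htL hnep)
  have hMN : M ≠ N := by rintro rfl; exact hpq (hM.maximal.prop hpN hqM hne)
  refine ⟨{L, M, N}, card_eq_three.2 ⟨L, M, N, hLM, hLN, hMN, rfl⟩, ?_, ⟨L, by simp, htL⟩, ?_⟩
  · simp [hL, hM, hN, hyL, hyM, hyN]
  rw [sum_insert (by simp [hLM, hLN]), sum_pair hMN]
  refine (h.three_mul_b_one_le hyp hyq hyt).trans ?_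
  gcongr

theorem isCliqueDecomposition_of_forall_isLine_iff (h : IsDRG G D b c) (h4 : ¬ HasClaw G 4)
    (hk : 3 * b 0 + 5 ≤ 5 * b 1) (hc : c 2 + 2 * b 0 + 3 ≤ b 2 + 3 * b 1) {𝓛 : Finset (Finset V)}
    (h𝓛 : ∀ L, L ∈ 𝓛 ↔ IsLine G b c L) : IsCliqueDecomposition G 𝓛 where
  isClique L hL := ((h𝓛 L).1 hL).maximal.prop
  eq_of_mem L hL M hM _ _ huv huL hvL huM hvM :=
    h.eq_of_isLine ((h𝓛 L).1 hL) ((h𝓛 M).1 hM) huv huL hvL huM hvM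
  exists_mem u v huv := by
    classical
    obtain ⟨T, -, hT, ⟨L, hL, hv⟩, -⟩ := h.exists_three_isLine h4 hk hc huv
    exact ⟨L, (h𝓛 L).2 (hT L hL).1, (hT L hL).2, hv⟩

theorem card_isLine_eq_three (h : IsDRG G D b c) (hD : 1 ≤ D) (h4 : ¬ HasClaw G 4)
    (hk : 3 * b 0 + 5 ≤ 5 * b 1) (hc : c 2 + 2 * b 0 + 3 ≤ b 2 + 3 * b 1) [DecidableEq V]
    {𝓛 : Finset (Finset V)} (h𝓛 : ∀ L, L ∈ 𝓛 ↔ IsLine G b c L) (y : V) :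
    #{L ∈ 𝓛 | y ∈ L} = 3 := by
  classical
  obtain ⟨t, hyt⟩ : ∃ t, G.Adj y t := by
    rw [← degree_pos_iff_exists_adj, h.isRegularOfDegree.degree_eq]
    exact h.b_pos hD
  obtain ⟨T, hcard, hT, -, hsum⟩ := h.exists_three_isLine h4 hk hc hyt
  have hsub : T ⊆ {L ∈ 𝓛 | y ∈ L} := fun L hL => mem_filter.2 ⟨(h𝓛 L).2 (hT L hL).1, (hT L hL).2⟩
  rw [← hcard, ← hsub.antisymm fun M hM => ?_]
  by_contra hMT
  have htotal := (h.isCliqueDecomposition_of_forall_isLine_iff h4 hk hc h𝓛).sum_card_erase y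
  have hle := sum_le_sum_of_subset (f := fun L : Finset V => #(L.erase y))
    (insert_subset hM hsub)
  rw [htotal, h.isRegularOfDegree.degree_eq, sum_insert hMT] at hle
  rw [mem_filter, h𝓛] at hM
  have hM1 := hM.1.two_mul_b_one_lt
  have hM2 := card_erase_add_one hM.2
  lia

theorem exists_isCliqueDecomposition (h : IsDRG G D b c) (hD : 1 ≤ D) (h4 : ¬ HasClaw G 4)
    (hk : 3 * b 0 + 5 ≤ 5 * b 1) (hc : c 2 + 2 * b 0 + 3 ≤ b 2 + 3 * b 1) [DecidableEq V] :
    ∃ 𝓛, IsCliqueDecomposition G 𝓛 ∧ (∀ y, #{L ∈ 𝓛 | y ∈ L} = 3) ∧ ∀ L ∈ 𝓛, 3 < #L := by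
  have h𝓛 (L : Finset V) : L ∈ (Set.toFinite {L | IsLine G b c L}).toFinset ↔ IsLine G b c L := by
    simp
  refine ⟨_, h.isCliqueDecomposition_of_forall_isLine_iff h4 hk hc h𝓛,
    h.card_isLine_eq_three hD h4 hk hc h𝓛, fun L hL => ?_⟩
  have := ((h𝓛 L).1 hL).two_mul_b_one_lt
  have := h.b_add_c_le hD
  have := h.c_one
  lia

end IsDRG

/-! ### Graphs with a quadrangle -/

theorem sum_comp_eq_of_forall_eq_or_eq {α β : Type*} [DecidableEq β] {s : Finset α} {g : α → β}
    {i j : β} (hij : ∀ v ∈ s, g v = i ∨ g v = j) (τ : β → ℝ) :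
    ∑ v ∈ s, τ (g v) = #{v ∈ s | g v = i} * τ i + (#s - #{v ∈ s | g v = i}) * τ j := by
  have hcard := card_filter_add_card_filter_not (s := s) fun v => g v = i
  rw [← sum_filter_add_sum_filter_not s fun v => g v = i, ← hcard]
  have hi : ∑ v ∈ s with g v = i, τ (g v) = #{v ∈ s | g v = i} * τ i := by
    rw [← nsmul_eq_mul, ← sum_const]
    exact sum_congr rfl fun v hv => by rw [(mem_filter.1 hv).2]
  have hj : ∑ v ∈ s with ¬ g v = i, τ (g v) = #{v ∈ s | ¬ g v = i} * τ j := by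
    rw [← nsmul_eq_mul, ← sum_const]
    refine sum_congr rfl fun v hv => ?_
    rw [mem_filter] at hv
    rw [(hij v hv.1).resolve_left hv.2]
  rw [hi, hj]
  push_cast
  ring

theorem IsCliqueDecomposition.mem_of_not_adj {V : Type*} [DecidableEq V] {G : SimpleGraph V}
    {𝓛 : Finset (Finset V)} (h : IsCliqueDecomposition G 𝓛) {y p q z v : V}
    (h3 : #{L ∈ 𝓛 | y ∈ L} = 3) (hyp : G.Adj y p) (hyq : G.Adj y q) (hyv : G.Adj y v)
    (hpq : p ≠ q ∧ ¬ G.Adj p q) (hz : (p ≠ z ∧ ¬ G.Adj p z) ∧ q ≠ z ∧ ¬ G.Adj q z)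
    (hv : (p ≠ v ∧ ¬ G.Adj p v) ∧ q ≠ v ∧ ¬ G.Adj q v) {ℓ : Finset V} (hℓ : ℓ ∈ 𝓛) (hyℓ : y ∈ ℓ)
    (hzℓ : z ∈ ℓ) : v ∈ ℓ := by
  obtain ⟨P, hP, hyP, hpP⟩ := h.exists_mem y p hyp
  obtain ⟨Q, hQ, hyQ, hqQ⟩ := h.exists_mem y q hyq
  obtain ⟨L, hL, hyL, hvL⟩ := h.exists_mem y v hyv
  have hne {M N : Finset V} {r s : V} (hM : M ∈ 𝓛) (hrM : r ∈ M) (hsN : s ∈ N)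
      (hrs : r ≠ s ∧ ¬ G.Adj r s) : M ≠ N := by
    rintro rfl
    exact hrs.2 (h.isClique M hM hrM hsN hrs.1)
  by_contra hvℓ
  have hℓL : ℓ ≠ L := by rintro rfl; exact hvℓ hvL
  have hfour : #{P, Q, ℓ, L} = 4 := by
    rw [card_insert_of_notMem, card_eq_three.2 ⟨Q, ℓ, L, hne hQ hqQ hzℓ hz.2, hne hQ hqQ hvL hv.2,
      hℓL, rfl⟩]
    simp [hne hP hpP hqQ hpq, hne hP hpP hzℓ hz.1, hne hP hpP hvL hv.1]
  have hle : #{P, Q, ℓ, L} ≤ #{L ∈ 𝓛 | y ∈ L} := card_le_card fun M hM => by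
    simp only [mem_insert, mem_singleton] at hM
    rcases hM with rfl | rfl | rfl | rfl <;> simp [*]
  lia

namespace IsDRG

variable {V : Type*} [Fintype V] {G : SimpleGraph V} {D : ℕ} {b c : ℕ → ℕ}

/-- The common neighbours of `w` and `p` lie at distance two or three from `z`; the first contribute
to `c 3` and the second to `b 2`. -/
theorem b_zero_add_two_le (h : IsDRG G D b c) {w p q z : V} (hwp : G.Adj w p) (hwq : G.Adj w q)
    (hne : p ≠ q) (hpq : ¬ G.Adj p q) (hzw : G.dist z w = 3) (hzp : G.dist z p = 2)
    (hzq : G.dist z q = 2) : b 0 + 2 ≤ c 3 + b 2 + b 1 := by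
  classical
  have hcard := h.card_inter_of_adj hwp
  have hc := h.card_closer z w
  have hb := h.card_farther z p
  rw [hzw] at hc
  rw [hzp] at hb
  set s := G.neighborFinset w ∩ G.neighborFinset p with hs
  have hadj {v : V} (hv : v ∈ s) : G.Adj w v ∧ G.Adj p v := by simpa [hs] using hv
  have hle : #{v ∈ s | G.dist z v = 2} + 1 + 1 ≤ c 3 := by
    have hp : p ∉ insert q {v ∈ s | G.dist z v = 2} := by simp [hs, hne]
    have hq : q ∉ {v ∈ s | G.dist z v = 2} := by simp [hs, hpq]
    rw [← hc, ← card_insert_of_notMem hq, ← card_insert_of_notMem hp]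
    refine card_le_card fun v hv => ?_
    simp only [mem_insert, mem_filter, mem_neighborFinset] at hv ⊢
    obtain rfl | rfl | ⟨hv, hzv⟩ := hv
    · exact ⟨hwp, by lia⟩
    · exact ⟨hwq, by lia⟩
    · exact ⟨(hadj hv).1, by lia⟩
  have hge : #{v ∈ s | ¬ G.dist z v = 2} + 1 ≤ b 2 := by
    rw [← hb, ← card_insert_of_notMem (a := w) (by simp [hs])]
    refine card_le_card fun v hv => ?_
    simp only [mem_insert, mem_filter, mem_neighborFinset] at hv ⊢
    obtain rfl | ⟨hv, hzv⟩ := hv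
    · exact ⟨hwp.symm, by lia⟩
    · have hpv := h.dist_le_add_one z (hadj hv).2
      have hvw := h.dist_le_add_one z (hadj hv).1.symm
      exact ⟨(hadj hv).2, by lia⟩
  have hsplit := card_filter_add_card_filter_not (s := s) fun v => G.dist z v = 2
  lia

theorem sum_dist_eq_zero [DecidableEq V] (h : IsDRG G D b c)
    {𝓛 : Finset (Finset V)} {m : ℕ} (h𝓛 : IsCliqueDecomposition G 𝓛)
    (hm : ∀ y, #{L ∈ 𝓛 | y ∈ L} = m) {τ : ℕ → ℝ}
    (hτ : ∀ i ≤ D, radialAdj b c τ i = -m * τ i) (x : V) {L : Finset V} (hL : L ∈ 𝓛) :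
    ∑ v ∈ L, τ (G.dist x v) = 0 := by
  classical
  exact (h𝓛.adjMatrix_mulVec_eq_iff hm _).1 (h.adjMatrix_mulVec_dist hτ x) L hL

theorem eq_zero_of_radialAdj_eq (h : IsDRG G D b c) (hD : 2 ≤ D) {θ : ℝ} {τ : ℕ → ℝ}
    (hτ : ∀ i ≤ D, radialAdj b c τ i = θ * τ i) (h2 : τ 2 = 0) (h3 : τ 3 = 0) : τ 0 = 0 := by
  have h1 : τ 1 = 0 := by
    have hrec := hτ 2 hD
    simp only [radialAdj, h2, h3, mul_zero, add_zero, mul_eq_zero, Nat.cast_eq_zero] at hrec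
    exact hrec.resolve_left (h.c_pos (by lia) hD).ne'
  simpa [radialAdj, h1, h2, h.c_one] using hτ 1 (by lia)

end IsDRG

theorem eq_zero_of_line_equations {n r s α β : ℝ} (hα : r * α + (n - r) * β = 0)
    (hβ : s * β + (n - s) * α = 0) (hn : 0 < n) (hrs : n < s + r) : α = 0 ∧ β = 0 := by
  have hαβ : α = β := by
    have hmul : (s + r - n) * (α - β) = 0 := by linear_combination hα - hβ
    exact sub_eq_zero.1 ((mul_eq_zero.1 hmul).resolve_left (sub_pos.2 hrs).ne')
  subst hαβ
  have hmul : n * α = 0 := by linear_combination hα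
  simpa [hn.ne'] using hmul

namespace IsDRG

variable {V : Type*} [Fintype V] {G : SimpleGraph V} {D : ℕ} {b c : ℕ → ℕ}

theorem card_farther_of_isClique (h : IsDRG G D b c) {w y : V} {ℓ : Finset V}
    (hℓ : G.IsClique (ℓ : Set V)) (hyℓ : y ∈ ℓ)
    (hmem : ∀ v, G.Adj y v → G.dist w v = G.dist w y + 1 → v ∈ ℓ) :
    #{v ∈ ℓ | G.dist w v = G.dist w y + 1} = b (G.dist w y) := by
  classical
  rw [← h.card_farther w y]
  congr 1
  ext v
  simp only [mem_filter, mem_neighborFinset]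
  refine ⟨fun hv => ⟨hℓ hyℓ hv.1 ?_, hv.2⟩, fun hv => ⟨hmem v hv.1 hv.2, hv.2⟩⟩
  rintro rfl
  lia

theorem card_closer_of_isClique (h : IsDRG G D b c) {x y : V} {ℓ : Finset V}
    (hℓ : G.IsClique (ℓ : Set V)) (hyℓ : y ∈ ℓ)
    (hmem : ∀ v, G.Adj y v → G.dist x v + 1 = G.dist x y → v ∈ ℓ) :
    #{v ∈ ℓ | G.dist x v + 1 = G.dist x y} = c (G.dist x y) := by
  classical
  rw [← h.card_closer x y]
  congr 1
  ext v
  simp only [mem_filter, mem_neighborFinset]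
  refine ⟨fun hv => ⟨hℓ hyℓ hv.1 ?_, hv.2⟩, fun hv => ⟨hmem v hv.1 hv.2, hv.2⟩⟩
  rintro rfl
  lia

theorem dist_eq_or_dist_eq_of_isClique (h : IsDRG G D b c) {w y z : V} {ℓ : Finset V}
    (hℓ : G.IsClique (ℓ : Set V)) (hyℓ : y ∈ ℓ) (hzℓ : z ∈ ℓ)
    (hyz : G.dist w z = G.dist w y + 1) {v : V} (hv : v ∈ ℓ) :
    G.dist w v = G.dist w y ∨ G.dist w v = G.dist w z := by
  by_cases hvy : y = v
  · simp [hvy]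
  by_cases hvz : v = z
  · simp [hvz]
  have := h.dist_le_add_one w (hℓ hyℓ hv hvy)
  have := h.dist_le_add_one w (hℓ hv hzℓ hvz)
  lia

theorem exists_dist_eq_dist_add (h : IsDRG G D b c) {w z : V} {j : ℕ} (hj : G.dist w z + j ≤ D) :
    ∃ x, G.dist z x = j ∧ G.dist w x = G.dist w z + j := by
  induction j with
  | zero => exact ⟨z, by simp⟩
  | succ j ih =>
    obtain ⟨u, hzu, hwu⟩ := ih (by lia)
    obtain ⟨x, hux, hwx⟩ := h.exists_farther (x := w) (y := u) (by lia)
    have := h.dist_le_add_one z hux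
    have := h.connected.dist_triangle (u := w) (v := z) (w := x)
    exact ⟨x, by lia, by lia⟩

/-- The values at `2` and `3` satisfy two independent linear equations, which express that the
radial functions around `w` and `x` have sum zero on the line `ℓ`. -/
theorem eq_zero_and_eq_zero_of_sum_line (h : IsDRG G D b c)
    {w x y z : V} (hwy : G.dist w y = 2) (hwz : G.dist w z = 3) (hwx : G.dist w x = 5)
    (hxy : G.dist x y = 3) (hxz : G.dist x z = 2)
    {ℓ : Finset V} (hℓ : G.IsClique (ℓ : Set V)) (hyℓ : y ∈ ℓ) (hzℓ : z ∈ ℓ)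
    (hmem : ∀ v, G.Adj y v → G.dist w v = 3 → v ∈ ℓ) {τ : ℕ → ℝ}
    (hτ : ∀ u, ∑ v ∈ ℓ, τ (G.dist u v) = 0) (hcard : #ℓ < c 3 + b 2) : τ 2 = 0 ∧ τ 3 = 0 := by
  have hwℓ : ∀ v ∈ ℓ, G.dist w v = 3 ∨ G.dist w v = 2 := fun v hv => by
    simpa [hwy, hwz, or_comm] using h.dist_eq_or_dist_eq_of_isClique (w := w) hℓ hyℓ hzℓ (by lia) hv
  have hxℓ : ∀ v ∈ ℓ, G.dist x v = 2 ∨ G.dist x v = 3 := fun v hv => by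
    simpa [hxy, hxz] using h.dist_eq_or_dist_eq_of_isClique (w := x) hℓ hzℓ hyℓ (by lia) hv
  have hb : #{v ∈ ℓ | G.dist w v = 3} = b 2 := by
    simpa [hwy] using h.card_farther_of_isClique (w := w) hℓ hyℓ (by simpa [hwy] using hmem)
  have hc : #{v ∈ ℓ | G.dist x v = 2} = c 3 := by
    have hmem' (v : V) (hyv : G.Adj y v) (hxv : G.dist x v + 1 = G.dist x y) : v ∈ ℓ := by
      have := h.dist_le_add_one w hyv
      have := h.connected.dist_triangle (u := w) (v := v) (w := x)
      rw [SimpleGraph.dist_comm (u := v)] at this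
      exact hmem v hyv (by lia)
    simpa [hxy] using h.card_closer_of_isClique hℓ hyℓ hmem'
  have hsumw := sum_comp_eq_of_forall_eq_or_eq hwℓ τ
  have hsumx := sum_comp_eq_of_forall_eq_or_eq hxℓ τ
  rw [hτ, hb] at hsumw
  rw [hτ, hc] at hsumx
  have hpos : 0 < #ℓ := card_pos.2 ⟨y, hyℓ⟩
  exact (eq_zero_of_line_equations hsumw.symm hsumx.symm (by exact_mod_cast hpos)
    (by exact_mod_cast hcard)).symm

theorem exists_isCliqueDecomposition_of_hasQuadrangle (h : IsDRG G D b c) (hD : 5 ≤ D)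
    (h4 : ¬ HasClaw G 4) (hquad : HasQuadrangle G) [DecidableEq V] :
    ∃ 𝓛, IsCliqueDecomposition G 𝓛 ∧ (∀ y, #{L ∈ 𝓛 | y ∈ L} = 3) ∧ ∀ L ∈ 𝓛, 3 < #L := by
  have hter (i : ℕ) (hi : i + 2 ≤ D) :
      b 0 + 1 + c (i + 1) + b (i + 2) ≤ c (i + 2) + b (i + 1) + b 1 := by
    have := h.terwilliger hquad hi
    rify
    linarith
  have h0 := hter 0 (by lia)
  have h1 := hter 1 (by lia)
  have h2 := hter 2 (by lia)
  have h3 := hter 3 (by lia)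
  have hbc := h.b_add_c_le hD
  have hc := h.c_one
  norm_num at h0 h1 h2 h3
  exact h.exists_isCliqueDecomposition (by lia) h4 (by lia) (by lia)

theorem dist_eq_two_of_adj (h : IsDRG G D b c) {w p y z : V} (hwp : G.Adj w p) (hpy : G.Adj p y)
    (hyz : G.Adj y z) (hwz : G.dist w z = 3) : G.dist z p = 2 := by
  have hzy := h.dist_le_add_one z hyz.symm
  have hzp := h.dist_le_add_one z hpy.symm
  have hzw := h.dist_le_add_one z hwp.symm
  rw [SimpleGraph.dist_self] at hzy
  rw [SimpleGraph.dist_comm] at hwz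
  lia

theorem mem_of_adj_of_dist_eq_three [DecidableEq V] (h : IsDRG G D b c) {𝓛 : Finset (Finset V)}
    (h𝓛 : IsCliqueDecomposition G 𝓛) {w p y q z v : V} (h3 : #{L ∈ 𝓛 | y ∈ L} = 3)
    (hwp : G.Adj w p) (hpy : G.Adj p y) (hyq : G.Adj y q) (hqw : G.Adj q w)
    (hpq : p ≠ q ∧ ¬ G.Adj p q) (hwz : G.dist w z = 3) {ℓ : Finset V} (hℓ : ℓ ∈ 𝓛) (hyℓ : y ∈ ℓ)
    (hzℓ : z ∈ ℓ) (hyv : G.Adj y v) (hwv : G.dist w v = 3) : v ∈ ℓ := by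
  have hp : G.dist w p = 1 := SimpleGraph.dist_eq_one_iff_adj.2 hwp
  have hq : G.dist w q = 1 := SimpleGraph.dist_eq_one_iff_adj.2 hqw.symm
  have hfar {r u : V} (hr : G.dist w r = 1) (hu : G.dist w u = 3) : r ≠ u ∧ ¬ G.Adj r u :=
    h.ne_and_not_adj_of_dist_add_one_lt (w := w) (by lia)
  exact h𝓛.mem_of_not_adj h3 hpy.symm hyq hyv hpq ⟨hfar hp hwz, hfar hq hwz⟩
    ⟨hfar hp hwv, hfar hq hwv⟩ hℓ hyℓ hzℓ

theorem le_four_of_hasQuadrangle (h : IsDRG G D b c) (h4 : ¬ HasClaw G 4)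
    (hquad : HasQuadrangle G) : D ≤ 4 := by
  classical
  by_contra! hD
  obtain ⟨𝓛, h𝓛, h3, hlt⟩ := h.exists_isCliqueDecomposition_of_hasQuadrangle hD h4 hquad
  have := h.connected.nonempty
  obtain ⟨τ, hτ0, hτ⟩ := h.exists_radialAdj_eq
    (h𝓛.isAdjEigenvalue_neg h3 (card_lt_card_of_card_filter_mem_eq h3 hlt))
  obtain ⟨w, p, y, q, hwy, hpq, hwp, hpy, hyq, hqw⟩ := hquad
  obtain ⟨hne, hadj, -⟩ := dist_eq_two_iff.1 hpq
  obtain ⟨z, hyz, hwz⟩ := h.exists_farther (x := w) (y := y) (by lia)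
  obtain ⟨x, hzx, hwx⟩ := h.exists_dist_eq_dist_add (w := w) (z := z) (j := 2) (by lia)
  rw [hwy] at hwz
  rw [hwz] at hwx
  obtain ⟨ℓ, hℓ, hyℓ, hzℓ⟩ := h𝓛.exists_mem y z hyz
  have hzw : G.dist z w = 3 := by rw [SimpleGraph.dist_comm, hwz]
  have hxz : G.dist x z = 2 := by rw [SimpleGraph.dist_comm, hzx]
  have hxy : G.dist x y = 3 := by
    have := h.dist_le_add_one x hyz.symm
    have := h.connected.dist_triangle (u := w) (v := y) (w := x)
    rw [SimpleGraph.dist_comm (u := y)] at this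
    lia
  have hcb := h.b_zero_add_two_le hwp hqw.symm hne hadj hzw
    (h.dist_eq_two_of_adj hwp hpy hyz hwz) (h.dist_eq_two_of_adj hqw.symm hyq.symm hyz hwz)
  have hcard := h.card_add_b_one_le hyz fun v hv hvy hvz =>
    ⟨h𝓛.isClique ℓ hℓ hyℓ hv hvy.symm, h𝓛.isClique ℓ hℓ hzℓ hv hvz.symm⟩
  obtain ⟨hτ2, hτ3⟩ := h.eq_zero_and_eq_zero_of_sum_line hwy hwz hwx hxy hxz
    (h𝓛.isClique ℓ hℓ) hyℓ hzℓ
    (fun v => h.mem_of_adj_of_dist_eq_three h𝓛 (h3 y) hwp hpy hyq hqw ⟨hne, hadj⟩ hwz hℓ hyℓ hzℓ)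
    (fun u => h.sum_dist_eq_zero h𝓛 h3 hτ u hℓ) (by lia)
  exact hτ0 (h.eq_zero_of_radialAdj_eq (by lia) hτ hτ2 hτ3)

end IsDRG

/-- a DRG with `D ≥ 3`, `3 ≤ k < 3(a₁+1)`, with a 3-claw but no 4-claws,
has diameter at most 4. -/
theorem statement8 {V : Type*} [Fintype V] (G : SimpleGraph V) (D : ℕ) (b c : ℕ → ℕ)
    (hdrg : IsDRG G D b c) (hD : 3 ≤ D) (hk : 3 ≤ b 0)
    (hk' : (b 0 : ℤ) < 3 * (((b 0 : ℤ) - b 1 - c 1) + 1))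
    (hclaw3 : HasClaw G 3) (hclaw4 : ¬ HasClaw G 4) :
    D ≤ 4 := by
  have hc := hdrg.c_one
  exact hdrg.le_four_of_hasQuadrangle hclaw4 (hdrg.hasQuadrangle (by lia) hclaw3 hclaw4)
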